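/- Fix a constant w > 0. Then, as q → ∞, |∑_{d₁,d₂ ≤ W} θ_{d₁} θ_{d₂} χ₀([d₁,d₂]) / [d₁,d₂]| ≤ (1 + O(L^{−1})) · q/(φ(q)·w·L), where [d₁,d₂] denotes the least common multiple of d₁ and d₂ and χ₀ is the principal Dirichlet character mod q. -/

import Mathlib

open scoped Classical

/-- The sieve weights `θ_d = μ(d)·log(W/d)/log W` for `1 ≤ d ≤ W = q^w`, and `0` otherwise. -/
noncomputable def thetaD (q : ℕ) (w : ℝ) (d : ℕ) : ℝ :=
  if 1 ≤ d ∧ (d : ℝ) ≤ (q : ℝ) ^ w then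
    (ArithmeticFunction.moebius d : ℝ) * Real.log ((q : ℝ) ^ w / d) /
      Real.log ((q : ℝ) ^ w)
  else 0

/-!
Since `1 / [d₁, d₂] = (d₁ d₂)⁻¹ ∑_{r ∣ (d₁, d₂)} φ(r)`, the quadratic form is a nonnegative
combination of squares. Writing the Möbius function restricted to integers coprime to `q` as the
Dirichlet convolution of `μ` with the indicator of the integers composed of primes dividing `q`, and
using `∑ 1 / n = q / φ(q)` over the latter, one bounds the form by
`q / φ(q) * ∑_{n ≤ W} g(W / n) ^ 2 / n`, where `g(x) = ∑_{d ≤ x} μ(d) log(x / d) / d`.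

Möbius inversion gives `∑_{n ≤ W} g(W / n) / n = log W` exactly, so with `g² = 2 g - 1 + (g - 1)²`
it remains to see that `∑_{n ≤ W} (g(W / n) - 1) ^ 2 / n` is bounded, for which
`g(x) - 1 = O(1 / log x)` suffices. Up to the substitution `t = 1 / x`, the Mellin transform of
`g - 1` is `1 / (s² ζ(1 + s)) - 1 / s`. Its derivative, the transform of `log t * (g(1 / t) - 1)`,
is integrable on vertical lines uniformly in `0 < re s ≤ 1`, by a polynomial lower bound for `ζ` to
the right of the line `re s = 1`. Mellin inversion on `re s = 1 / log x` then gives the decay.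
-/

section LogMean

open Finset Nat ArithmeticFunction

theorem sum_Icc_sum_divisorsAntidiagonal {M : Type*} [AddCommMonoid M] (F : ℕ → ℕ → M) (N : ℕ) :
    ∑ n ∈ Icc 1 N, ∑ p ∈ n.divisorsAntidiagonal, F p.1 p.2 =
      ∑ k ∈ Icc 1 N, ∑ m ∈ Icc 1 (N / k), F k m := by
  rw [sum_sigma', sum_sigma']
  refine sum_bij' (fun a _ ↦ ⟨a.2.1, a.2.2⟩) (fun b _ ↦ ⟨b.1 * b.2, (b.1, b.2)⟩) ?_ ?_ ?_
    (fun _ _ ↦ rfl) (fun _ _ ↦ rfl)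
  · rintro ⟨n, k, m⟩ h
    simp only [mem_sigma, mem_Icc, mem_divisorsAntidiagonal] at h ⊢
    obtain ⟨⟨-, hN⟩, rfl, h0⟩ := h
    obtain ⟨hk, hm⟩ := mul_ne_zero_iff.1 h0
    exact ⟨⟨pos_of_ne_zero hk, (Nat.le_mul_of_pos_right k (pos_of_ne_zero hm)).trans hN⟩,
      pos_of_ne_zero hm, (Nat.le_div_iff_mul_le (pos_of_ne_zero hk)).2 (mul_comm k m ▸ hN)⟩
  · rintro ⟨k, m⟩ h
    simp only [mem_sigma, mem_Icc, mem_divisorsAntidiagonal] at h ⊢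
    obtain ⟨⟨hk, -⟩, hm, hmk⟩ := h
    exact ⟨⟨Nat.mul_pos hk hm, mul_comm k m ▸ (Nat.le_div_iff_mul_le hk).1 hmk⟩, trivial,
      by positivity⟩
  · rintro ⟨n, k, m⟩ h
    simp only [mem_sigma, mem_divisorsAntidiagonal] at h
    obtain ⟨-, rfl, -⟩ := h
    rfl

/-- The logarithmically weighted mean `∑_{n ≤ x} (a n / n) log (x / n)`. For `a = μ` it tends to
`1`, at a rate that the main estimate depends on. -/
noncomputable def logMean (a : ArithmeticFunction ℝ) (x : ℝ) : ℝ :=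
  ∑ n ∈ Icc 1 ⌊x⌋₊, a n / n * Real.log (x / n)

theorem logMean_mul (a b : ArithmeticFunction ℝ) (x : ℝ) :
    logMean (a * b) x = ∑ k ∈ Icc 1 ⌊x⌋₊, a k / k * logMean b (x / k) := by
  calc logMean (a * b) x
      = ∑ n ∈ Icc 1 ⌊x⌋₊, ∑ p ∈ n.divisorsAntidiagonal,
          a p.1 / p.1 * (b p.2 / p.2 * Real.log (x / p.1 / p.2)) := by
        refine sum_congr rfl fun n _ ↦ ?_
        rw [mul_apply, sum_div, sum_mul]
        refine sum_congr rfl fun p hp ↦ ?_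
        rw [← (mem_divisorsAntidiagonal.1 hp).1, Nat.cast_mul, div_div, mul_div_mul_comm, mul_assoc]
    _ = ∑ k ∈ Icc 1 ⌊x⌋₊, a k / k * logMean b (x / k) := by
        rw [sum_Icc_sum_divisorsAntidiagonal
          (fun k m ↦ a k / k * (b m / m * Real.log (x / k / m)))]
        simp_rw [logMean, floor_div_natCast, mul_sum]

theorem logMean_one {x : ℝ} (hx : 1 ≤ x) : logMean 1 x = Real.log x := by
  rw [logMean, sum_eq_single_of_mem 1 (by simpa using hx)]
  · simp
  · intro n _ hn
    simp [one_apply_ne hn]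

theorem sum_inv_mul_logMean_moebius {x : ℝ} (hx : 1 ≤ x) :
    ∑ n ∈ Icc 1 ⌊x⌋₊, (n : ℝ)⁻¹ * logMean (moebius : ArithmeticFunction ℤ) (x / n) =
      Real.log x := by
  rw [← logMean_one hx, ← coe_zeta_mul_coe_moebius, logMean_mul]
  refine sum_congr rfl fun n hn ↦ ?_
  have hn0 : n ≠ 0 := Nat.ne_of_gt (mem_Icc.1 hn).1
  simp [natCoe_apply, zeta_apply_ne hn0]

end LogMean

section Coprime

open Finset Nat ArithmeticFunction

/-- The Möbius function restricted to the integers coprime to `K`. -/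
noncomputable def moebiusCoprime (K : ℕ) : ArithmeticFunction ℝ :=
  ⟨fun n ↦ if n.Coprime K then (moebius n : ℝ) else 0, by simp⟩

/-- The indicator function of the positive integers all of whose prime factors divide `K`. -/
noncomputable def factoredIndicator (K : ℕ) : ArithmeticFunction ℝ :=
  ⟨fun n ↦ if n ∈ factoredNumbers K.primeFactors then 1 else 0, by simp [factoredNumbers]⟩

theorem moebiusCoprime_apply (K n : ℕ) :
    moebiusCoprime K n = if n.Coprime K then (moebius n : ℝ) else 0 := rfl

theorem factoredIndicator_apply (K n : ℕ) :
    factoredIndicator K n = if n ∈ factoredNumbers K.primeFactors then 1 else 0 := rfl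

theorem factoredIndicator_nonneg (K n : ℕ) : 0 ≤ factoredIndicator K n := by
  rw [factoredIndicator_apply]; split_ifs <;> norm_num

theorem isMultiplicative_moebiusCoprime (K : ℕ) : (moebiusCoprime K).IsMultiplicative := by
  refine ⟨by simp [moebiusCoprime_apply], fun {m n} hmn ↦ ?_⟩
  simp only [moebiusCoprime_apply, coprime_mul_iff_left,
    isMultiplicative_moebius.map_mul_of_coprime hmn]
  split_ifs <;> simp_all

theorem isMultiplicative_factoredIndicator (K : ℕ) : (factoredIndicator K).IsMultiplicative := by
  rw [IsMultiplicative.iff_ne_zero]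
  refine ⟨by simp [factoredIndicator_apply, mem_factoredNumbers], fun {m n} hm hn _ ↦ ?_⟩
  simp only [factoredIndicator_apply, mem_factoredNumbers_iff_primeFactors_subset,
    primeFactors_mul hm hn, union_subset_iff]
  split_ifs <;> simp_all

theorem prime_pow_mem_factoredNumbers_iff {s : Finset ℕ} {p : ℕ} (hp : p.Prime) (i : ℕ) :
    p ^ i ∈ factoredNumbers s ↔ i = 0 ∨ p ∈ s := by
  rcases eq_or_ne i 0 with rfl | hi
  · simp [mem_factoredNumbers]
  · simp [mem_factoredNumbers_iff_primeFactors_subset, primeFactors_prime_pow hi hp, hi,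
      hp.ne_zero]

theorem zeta_mul_moebiusCoprime {K : ℕ} (hK : K ≠ 0) :
    (zeta : ArithmeticFunction ℝ) * moebiusCoprime K = factoredIndicator K := by
  refine (IsMultiplicative.eq_iff_eq_on_prime_powers _
    (isMultiplicative_zeta.natCast.mul (isMultiplicative_moebiusCoprime K)) _
    (isMultiplicative_factoredIndicator K)).2 fun p i hp ↦ ?_
  rw [coe_zeta_mul_apply, factoredIndicator_apply]
  simp only [prime_pow_mem_factoredNumbers_iff hp]
  by_cases hpK : p ∣ K
  · have hcop (j : ℕ) : ¬(p ^ (j + 1)).Coprime K := by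
      rwa [coprime_pow_left_iff j.succ_pos, hp.coprime_iff_not_dvd, not_not]
    rw [sum_divisors_prime_pow hp, sum_range_succ']
    simp [moebiusCoprime_apply, hcop, hp, hpK, hK]
  · have hcop (d : ℕ) (hd : d ∈ (p ^ i).divisors) : moebiusCoprime K d = (moebius d : ℝ) := by
      rw [moebiusCoprime_apply, if_pos]
      exact (((hp.coprime_iff_not_dvd).2 hpK).pow_left i).coprime_dvd_left (dvd_of_mem_divisors hd)
    have hsum := coe_zeta_mul_apply (R := ℝ) (f := (moebius : ArithmeticFunction ℤ)) (x := p ^ i)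
    rw [coe_zeta_mul_coe_moebius] at hsum
    simp only [intCoe_apply] at hsum
    rw [sum_congr rfl hcop, ← hsum, one_apply]
    simp [hpK, hp.ne_one]

theorem moebiusCoprime_eq_factoredIndicator_mul {K : ℕ} (hK : K ≠ 0) :
    moebiusCoprime K = factoredIndicator K * (moebius : ArithmeticFunction ℤ) := by
  rw [← zeta_mul_moebiusCoprime hK, mul_right_comm, coe_zeta_mul_coe_moebius, one_mul]

theorem moebiusCoprime_mul (K r m : ℕ) :
    moebiusCoprime K (r * m) = moebiusCoprime K r * moebiusCoprime (r * K) m := by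
  simp only [moebiusCoprime_apply, coprime_mul_iff_left, coprime_mul_iff_right]
  by_cases hrm : m.Coprime r
  · rw [isMultiplicative_moebius.map_mul_of_coprime hrm.symm]
    split_ifs <;> simp_all
  · have hsq : ¬Squarefree (r * m) := fun h ↦ hrm (coprime_of_squarefree_mul h).symm
    simp [moebius_eq_zero_of_not_squarefree hsq, hrm]

theorem moebiusCoprime_sq (K n : ℕ) :
    moebiusCoprime K n ^ 2 = if Squarefree n ∧ n.Coprime K then 1 else 0 := by
  rw [moebiusCoprime_apply]
  by_cases hs : Squarefree n
  · have hμ : (moebius n : ℝ) ^ 2 = 1 := mod_cast moebius_sq_eq_one_of_squarefree hs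
    split_ifs <;> simp_all
  · simp [moebius_eq_zero_of_not_squarefree hs, hs]

theorem sum_factoredIndicator_div_le {K : ℕ} (hK : K ≠ 0) (N : ℕ) :
    ∑ k ∈ Icc 1 N, factoredIndicator K k / k ≤ (K : ℝ) / φ K := by
  let inv : ℕ →* ℝ := (invMonoidHom : ℝ →* ℝ).comp (Nat.castRingHom ℝ : ℕ →* ℝ)
  have hinv (n : ℕ) : inv n = (n : ℝ)⁻¹ := rfl
  have hlt {p : ℕ} (hp : p.Prime) : ‖inv p‖ < 1 := by
    rw [hinv, norm_inv, Real.norm_natCast]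
    exact inv_lt_one_of_one_lt₀ (mod_cast hp.one_lt)
  have hsum := (EulerProduct.summable_and_hasSum_factoredNumbers_prod_filter_prime_geometric
    hlt K.primeFactors).2
  have hprod : ∏ p ∈ K.primeFactors with p.Prime, (1 - inv p)⁻¹ = (K : ℝ) / φ K := by
    have htot : (φ K : ℝ) = K * ∏ p ∈ K.primeFactors, (1 - (p : ℝ)⁻¹) := by
      rw [← Rat.cast_natCast, totient_eq_mul_prod_factors]
      push_cast
      rfl
    rw [filter_true_of_mem fun p hp ↦ prime_of_mem_primeFactors hp, prod_inv_distrib, htot,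
      div_mul_cancel_left₀ (mod_cast hK)]
    simp_rw [hinv]
  have hterm (k : ℕ) :
      factoredIndicator K k / k = (factoredNumbers K.primeFactors).indicator inv k := by
    rw [factoredIndicator_apply, Set.indicator_apply]
    split_ifs <;> simp [hinv]
  simp_rw [hterm]
  rw [← hprod]
  refine sum_le_hasSum _ (fun k _ ↦ ?_) (hasSum_subtype_iff_indicator.1 hsum)
  exact hterm k ▸ div_nonneg (factoredIndicator_nonneg K k) k.cast_nonneg

theorem logMean_moebiusCoprime_sq_le {K : ℕ} (hK : K ≠ 0) (x : ℝ) :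
    logMean (moebiusCoprime K) x ^ 2 ≤ (K : ℝ) / φ K * ∑ k ∈ Icc 1 ⌊x⌋₊,
      factoredIndicator K k / k * logMean (moebius : ArithmeticFunction ℤ) (x / k) ^ 2 := by
  have hweight (k : ℕ) : 0 ≤ factoredIndicator K k / k :=
    div_nonneg (factoredIndicator_nonneg K k) k.cast_nonneg
  rw [moebiusCoprime_eq_factoredIndicator_mul hK, logMean_mul]
  refine (sum_sq_le_sum_mul_sum_of_sq_le_mul _ (f := fun k : ℕ ↦ factoredIndicator K k / k)
    (g := fun k : ℕ ↦
      factoredIndicator K k / k * logMean (moebius : ArithmeticFunction ℤ) (x / k) ^ 2)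
    (fun k _ ↦ hweight k) (fun k _ ↦ mul_nonneg (hweight k) (sq_nonneg _))
    fun k _ ↦ le_of_eq (by ring)).trans ?_
  exact mul_le_mul_of_nonneg_right (sum_factoredIndicator_div_le hK _)
    (sum_nonneg fun k _ ↦ mul_nonneg (hweight k) (sq_nonneg _))

end Coprime

section LcmForm

open Finset Nat ArithmeticFunction

theorem gcd_eq_sum_totient {d₁ d₂ N : ℕ} (h₁ : d₁ ∈ Icc 1 N) :
    Nat.gcd d₁ d₂ = ∑ r ∈ Icc 1 N, if r ∣ d₁ ∧ r ∣ d₂ then φ r else 0 := by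
  obtain ⟨hpos, hle⟩ := mem_Icc.1 h₁
  rw [← sum_filter]
  nth_rw 1 [← sum_totient (Nat.gcd d₁ d₂)]
  refine sum_congr (Finset.ext fun r ↦ ?_) fun _ _ ↦ rfl
  simp only [mem_divisors, mem_filter, mem_Icc, dvd_gcd_iff]
  refine ⟨fun ⟨hr, _⟩ ↦ ⟨⟨pos_of_dvd_of_pos hr.1 hpos, (le_of_dvd hpos hr.1).trans hle⟩, hr⟩,
    fun ⟨_, hr⟩ ↦ ⟨hr, (gcd_pos_of_pos_left _ hpos).ne'⟩⟩

theorem inv_lcm_eq_sum_totient {d₁ d₂ N : ℕ} (h₁ : d₁ ∈ Icc 1 N) :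
    (Nat.lcm d₁ d₂ : ℝ)⁻¹ =
      ∑ r ∈ Icc 1 N, (φ r : ℝ) * ((if r ∣ d₁ then (d₁ : ℝ)⁻¹ else 0) *
        (if r ∣ d₂ then (d₂ : ℝ)⁻¹ else 0)) := by
  have hgcd : (Nat.gcd d₁ d₂ : ℝ) ≠ 0 :=
    mod_cast (gcd_pos_of_pos_left d₂ (mem_Icc.1 h₁).1).ne'
  have hmul : (Nat.gcd d₁ d₂ : ℝ) * Nat.lcm d₁ d₂ = d₁ * d₂ := mod_cast gcd_mul_lcm d₁ d₂
  calc (Nat.lcm d₁ d₂ : ℝ)⁻¹ = Nat.gcd d₁ d₂ * ((d₁ : ℝ)⁻¹ * (d₂ : ℝ)⁻¹) := by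
        rw [← mul_inv, ← hmul, mul_inv, mul_inv_cancel_left₀ hgcd]
    _ = _ := by
        rw [gcd_eq_sum_totient h₁, Nat.cast_sum, sum_mul]
        refine sum_congr rfl fun r _ ↦ ?_
        by_cases hr₁ : r ∣ d₁ <;> by_cases hr₂ : r ∣ d₂ <;> simp [hr₁, hr₂]

theorem sum_sum_mul_inv_lcm (b : ℕ → ℝ) (N : ℕ) :
    ∑ d₁ ∈ Icc 1 N, ∑ d₂ ∈ Icc 1 N, b d₁ * b d₂ * (Nat.lcm d₁ d₂ : ℝ)⁻¹ =
      ∑ r ∈ Icc 1 N, (φ r : ℝ) * (∑ d ∈ Icc 1 N, if r ∣ d then b d / d else 0) ^ 2 := by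
  have hterm {d₁ : ℕ} (h₁ : d₁ ∈ Icc 1 N) (d₂ : ℕ) :
      b d₁ * b d₂ * (Nat.lcm d₁ d₂ : ℝ)⁻¹ = ∑ r ∈ Icc 1 N,
        (φ r : ℝ) * ((if r ∣ d₁ then b d₁ / d₁ else 0) * (if r ∣ d₂ then b d₂ / d₂ else 0)) := by
    rw [inv_lcm_eq_sum_totient h₁, mul_sum]
    refine sum_congr rfl fun r _ ↦ ?_
    split_ifs <;> ring
  rw [sum_congr rfl fun d₁ h₁ ↦ sum_congr rfl fun d₂ _ ↦ hterm h₁ d₂,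
    sum_congr rfl fun _ _ ↦ sum_comm, sum_comm]
  simp_rw [sq, sum_mul_sum, mul_sum]

theorem sum_Icc_ite_dvd {M : Type*} [AddCommMonoid M] (F : ℕ → M) {r : ℕ} (hr : 0 < r) (N : ℕ) :
    (∑ d ∈ Icc 1 N, if r ∣ d then F d else 0) = ∑ m ∈ Icc 1 (N / r), F (r * m) := by
  rw [← sum_filter, ← sum_image fun _ _ _ _ h ↦ Nat.eq_of_mul_eq_mul_left hr h]
  refine sum_congr (Finset.ext fun d ↦ ?_) fun _ _ ↦ rfl
  simp only [mem_filter, mem_image, mem_Icc, Nat.le_div_iff_mul_le hr]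
  constructor
  · rintro ⟨⟨hd, hN⟩, m, rfl⟩
    exact ⟨m, ⟨Nat.pos_of_mul_pos_left hd, mul_comm r m ▸ hN⟩, rfl⟩
  · rintro ⟨m, ⟨hm, hN⟩, rfl⟩
    exact ⟨⟨Nat.mul_pos hr hm, mul_comm m r ▸ hN⟩, dvd_mul_right r m⟩

theorem sum_ite_dvd_moebiusCoprime_log (q : ℕ) (x : ℝ) {r : ℕ} (hr : 0 < r) :
    (∑ d ∈ Icc 1 ⌊x⌋₊, if r ∣ d then moebiusCoprime q d * Real.log (x / d) / d else 0) =
      moebiusCoprime q r / r * logMean (moebiusCoprime (r * q)) (x / r) := by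
  rw [sum_Icc_ite_dvd (fun d ↦ moebiusCoprime q d * Real.log (x / d) / d) hr, logMean,
    floor_div_natCast, mul_sum]
  refine sum_congr rfl fun m _ ↦ ?_
  rw [moebiusCoprime_mul, Nat.cast_mul, div_div]
  ring

theorem eq_prod_primeFactors_not_dvd {q r k : ℕ} (hq : q ≠ 0) (hr : Squarefree r)
    (hrq : r.Coprime q) (hk : k ∈ factoredNumbers (r * q).primeFactors) :
    r = ∏ p ∈ (r * k).primeFactors with ¬p ∣ q, p := by
  obtain ⟨hk0, hsub⟩ := mem_factoredNumbers_iff_primeFactors_subset.1 hk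
  rw [primeFactors_mul hr.ne_zero hq] at hsub
  nth_rw 1 [← prod_primeFactors_of_squarefree hr]
  refine prod_congr (Finset.ext fun p ↦ ?_) fun _ _ ↦ rfl
  rw [mem_filter, primeFactors_mul hr.ne_zero hk0, mem_union]
  constructor
  · intro hp
    have hprime := prime_of_mem_primeFactors hp
    exact ⟨.inl hp, fun hpq ↦ hprime.one_lt.ne'
      (eq_one_of_dvd_coprimes hrq (dvd_of_mem_primeFactors hp) hpq)⟩
  · rintro ⟨hp | hp, hpq⟩
    · exact hp
    · exact (mem_union.1 (hsub hp)).resolve_right fun h ↦ hpq (dvd_of_mem_primeFactors h)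

theorem sum_moebiusCoprime_sq_mul_factoredIndicator_le_one {q : ℕ} (hq : q ≠ 0) (n : ℕ) :
    ∑ p ∈ n.divisorsAntidiagonal,
      moebiusCoprime q p.1 ^ 2 * factoredIndicator (p.1 * q) p.2 ≤ 1 := by
  set R := ∏ p ∈ n.primeFactors with ¬p ∣ q, p
  calc _ ≤ ∑ p ∈ n.divisorsAntidiagonal, if p.1 = R then (1 : ℝ) else 0 := by
        refine sum_le_sum fun ⟨r, k⟩ hp ↦ ?_
        have hn : r * k = n := (mem_divisorsAntidiagonal.1 hp).1
        rw [moebiusCoprime_sq, factoredIndicator_apply]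
        split_ifs with hr hk hR <;> norm_num
        exact hR (by simpa only [hn] using eq_prod_primeFactors_not_dvd hq hr.1 hr.2 hk)
    _ = ∑ r ∈ n.divisors, if r = R then (1 : ℝ) else 0 :=
        sum_divisorsAntidiagonal (fun r _ ↦ if r = R then (1 : ℝ) else 0)
    _ ≤ 1 := by
        rw [sum_ite_eq']
        split_ifs <;> norm_num

theorem totient_mul_sq_logMean_le {q : ℕ} (hq : q ≠ 0) (x : ℝ) {r : ℕ} (hr : 0 < r) :
    φ r * (moebiusCoprime q r / r * logMean (moebiusCoprime (r * q)) (x / r)) ^ 2 ≤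
      (q : ℝ) / φ q * ∑ k ∈ Icc 1 (⌊x⌋₊ / r), moebiusCoprime q r ^ 2 *
        factoredIndicator (r * q) k *
        (((r * k : ℕ) : ℝ)⁻¹ * logMean (moebius : ArithmeticFunction ℤ) (x / (r * k : ℕ)) ^ 2) := by
  by_cases hrq : r.Coprime q
  swap
  · simp [moebiusCoprime_apply, hrq]
  have : (0 : ℝ) < φ r := mod_cast totient_pos.2 hr
  have : (0 : ℝ) < φ q := mod_cast totient_pos.2 (pos_of_ne_zero hq)
  have : (0 : ℝ) < r := mod_cast hr
  calc _ = φ r * (moebiusCoprime q r / r) ^ 2 *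
          logMean (moebiusCoprime (r * q)) (x / r) ^ 2 := by ring
    _ ≤ _ := mul_le_mul_of_nonneg_left
          (logMean_moebiusCoprime_sq_le (by positivity) (x / r)) (by positivity)
    _ = _ := by
        rw [totient_mul hrq, floor_div_natCast]
        simp_rw [mul_sum]
        refine sum_congr rfl fun k _ ↦ ?_
        push_cast
        rw [div_div]
        field_simp

theorem sum_sum_moebiusCoprime_log_mul_inv_lcm_le {q : ℕ} (hq : q ≠ 0) (x : ℝ) :
    ∑ d₁ ∈ Icc 1 ⌊x⌋₊, ∑ d₂ ∈ Icc 1 ⌊x⌋₊, (moebiusCoprime q d₁ * Real.log (x / d₁)) *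
        (moebiusCoprime q d₂ * Real.log (x / d₂)) * (Nat.lcm d₁ d₂ : ℝ)⁻¹ ≤
      (q : ℝ) / φ q * ∑ n ∈ Icc 1 ⌊x⌋₊,
        (n : ℝ)⁻¹ * logMean (moebius : ArithmeticFunction ℤ) (x / n) ^ 2 := by
  set G : ℕ → ℝ := fun n ↦ (n : ℝ)⁻¹ * logMean (moebius : ArithmeticFunction ℤ) (x / n) ^ 2
  rw [sum_sum_mul_inv_lcm (fun d ↦ moebiusCoprime q d * Real.log (x / d))]
  calc _ ≤ ∑ r ∈ Icc 1 ⌊x⌋₊, (q : ℝ) / φ q * ∑ k ∈ Icc 1 (⌊x⌋₊ / r),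
          moebiusCoprime q r ^ 2 * factoredIndicator (r * q) k * G (r * k) :=
        sum_le_sum fun r hr ↦ by
          have hr0 : 0 < r := (mem_Icc.1 hr).1
          rw [sum_ite_dvd_moebiusCoprime_log q x hr0]
          exact totient_mul_sq_logMean_le hq x hr0
    _ = (q : ℝ) / φ q * ∑ n ∈ Icc 1 ⌊x⌋₊, (∑ p ∈ n.divisorsAntidiagonal,
          moebiusCoprime q p.1 ^ 2 * factoredIndicator (p.1 * q) p.2) * G n := by
        rw [← mul_sum, ← sum_Icc_sum_divisorsAntidiagonal fun r k ↦
          moebiusCoprime q r ^ 2 * factoredIndicator (r * q) k * G (r * k)]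
        simp_rw [sum_mul]
        congr! 5 with n _ p hp
        exact (mem_divisorsAntidiagonal.1 hp).1
    _ ≤ _ := by
        gcongr with n
        exact mul_le_of_le_one_left (by positivity)
          (sum_moebiusCoprime_sq_mul_factoredIndicator_le_one hq n)

end LcmForm

section ZetaBounds

open Complex Set Filter Topology

/-- The difference `∫ x in n+1..n+2, x ^ (-s) - (n + 2) ^ (-s)` between an integral and its
right-endpoint value, in closed form; for `s = 1` the first summand has the junk value `0`. -/
noncomputable def zetaDefect (n : ℕ) (s : ℂ) : ℂ :=
  (((n + 2 : ℝ) : ℂ) ^ (1 - s) - ((n + 1 : ℝ) : ℂ) ^ (1 - s)) / (1 - s) - ((n + 2 : ℝ) : ℂ) ^ (-s)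

theorem norm_zetaDefect_le_of_forall {n : ℕ} {s : ℂ} (hs : s ≠ 1) {B : ℝ}
    (hB : ∀ x ∈ Icc (n + 1 : ℝ) (n + 2), ‖(x : ℂ) ^ (-s) - ((n + 2 : ℝ) : ℂ) ^ (-s)‖ ≤ B) :
    ‖zetaDefect n s‖ ≤ B := by
  have h1s : 1 - s ≠ 0 := sub_ne_zero.2 hs.symm
  have hderiv (x : ℝ) (hx : x ∈ Icc (n + 1 : ℝ) (n + 2)) : HasDerivWithinAt
      (fun x : ℝ ↦ (x : ℂ) ^ (1 - s) / (1 - s) - x * ((n + 2 : ℝ) : ℂ) ^ (-s))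
      ((x : ℂ) ^ (-s) - ((n + 2 : ℝ) : ℂ) ^ (-s)) (Icc (n + 1 : ℝ) (n + 2)) x := by
    have hx0 : x ≠ 0 := (lt_of_lt_of_le (by positivity) hx.1).ne'
    have hpow := (hasDerivAt_ofReal_cpow_const hx0 h1s).div_const (1 - s)
    rw [mul_div_cancel_left₀ _ h1s, sub_sub_cancel_left] at hpow
    have hlin := (ofRealCLM.hasDerivAt (x := x)).mul_const (((n + 2 : ℝ) : ℂ) ^ (-s))
    simp only [ofRealCLM_apply, ofReal_one, one_mul] at hlin
    exact (hpow.sub hlin).hasDerivWithinAt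
  have hle := (convex_Icc (n + 1 : ℝ) (n + 2)).norm_image_sub_le_of_norm_hasDerivWithin_le hderiv hB
    (left_mem_Icc.2 (by linarith)) (right_mem_Icc.2 (by linarith))
  have hlen : ‖(n + 2 : ℝ) - (n + 1)‖ = 1 := by norm_num
  rw [hlen, mul_one] at hle
  refine le_trans (le_of_eq (congrArg norm ?_)) hle
  rw [zetaDefect]
  push_cast
  ring

theorem norm_zetaDefect_le_two_mul (n : ℕ) {s : ℂ} (hs1 : s ≠ 1) (hs : 0 < s.re) :
    ‖zetaDefect n s‖ ≤ 2 * (n + 1 : ℝ) ^ (-s.re) := by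
  refine norm_zetaDefect_le_of_forall hs1 fun x hx ↦ ?_
  have hpow {y : ℝ} (hy : (n + 1 : ℝ) ≤ y) : ‖(y : ℂ) ^ (-s)‖ ≤ (n + 1 : ℝ) ^ (-s.re) := by
    rw [norm_cpow_eq_rpow_re_of_pos (lt_of_lt_of_le (by positivity) hy), neg_re]
    exact Real.rpow_le_rpow_of_nonpos (by positivity) hy (by linarith)
  refine (norm_sub_le _ _).trans ?_
  linarith [hpow hx.1, hpow (y := n + 2) (by linarith)]

theorem norm_zetaDefect_le_norm_mul (n : ℕ) {s : ℂ} (hs1 : s ≠ 1) (hs : 0 < s.re) :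
    ‖zetaDefect n s‖ ≤ ‖s‖ * (n + 1 : ℝ) ^ (-s.re - 1) := by
  have hs0 : s ≠ 0 := by rintro rfl; simp at hs
  refine norm_zetaDefect_le_of_forall hs1 fun x hx ↦ ?_
  have hpos {y : ℝ} (hy : y ∈ Icc (n + 1 : ℝ) (n + 2)) : 0 < y :=
    lt_of_lt_of_le (by positivity) hy.1
  have hderiv (y : ℝ) (hy : y ∈ Icc (n + 1 : ℝ) (n + 2)) :=
    (hasDerivAt_ofReal_cpow_const (hpos hy).ne' (neg_ne_zero.2 hs0)).hasDerivWithinAt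
      (s := Icc (n + 1 : ℝ) (n + 2))
  have hbound (y : ℝ) (hy : y ∈ Icc (n + 1 : ℝ) (n + 2)) :
      ‖-s * (y : ℂ) ^ (-s - 1)‖ ≤ ‖s‖ * (n + 1 : ℝ) ^ (-s.re - 1) := by
    rw [norm_mul, norm_neg, norm_cpow_eq_rpow_re_of_pos (hpos hy), sub_re, neg_re, one_re]
    exact mul_le_mul_of_nonneg_left
      (Real.rpow_le_rpow_of_nonpos (by positivity) hy.1 (by linarith)) (norm_nonneg s)
  refine ((convex_Icc (n + 1 : ℝ) (n + 2)).norm_image_sub_le_of_norm_hasDerivWithin_le hderiv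
    hbound (right_mem_Icc.2 (by linarith)) hx).trans ?_
  refine mul_le_of_le_one_right (by positivity) ?_
  rw [Real.norm_eq_abs, abs_le]
  constructor <;> linarith [hx.1, hx.2]

variable {θ : ℝ}

theorem norm_zetaDefect_le (hθ0 : 0 ≤ θ) (hθ1 : θ ≤ 1) (n : ℕ) {s : ℂ} (hs1 : s ≠ 1)
    (hs : 0 < s.re) :
    ‖zetaDefect n s‖ ≤ 2 * ‖s‖ ^ θ * (n + 1 : ℝ) ^ (-s.re - θ) := by
  have hn : (0 : ℝ) < n + 1 := by positivity
  calc ‖zetaDefect n s‖ = ‖zetaDefect n s‖ ^ (1 - θ) * ‖zetaDefect n s‖ ^ θ := by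
        rw [← Real.rpow_add_of_nonneg (norm_nonneg _) (by linarith) hθ0, sub_add_cancel,
          Real.rpow_one]
    _ ≤ (2 * (n + 1 : ℝ) ^ (-s.re)) ^ (1 - θ) * (‖s‖ * (n + 1 : ℝ) ^ (-s.re - 1)) ^ θ := by
        have := norm_zetaDefect_le_two_mul n hs1 hs
        have := norm_zetaDefect_le_norm_mul n hs1 hs
        gcongr
    _ = 2 ^ (1 - θ) * ‖s‖ ^ θ * (n + 1 : ℝ) ^ (-s.re - θ) := by
        rw [Real.mul_rpow (by norm_num) (by positivity),
          Real.mul_rpow (by positivity) (by positivity), ← Real.rpow_mul hn.le,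
          ← Real.rpow_mul hn.le,
          show -s.re - θ = -s.re * (1 - θ) + (-s.re - 1) * θ by ring, Real.rpow_add hn]
        ring
    _ ≤ 2 * ‖s‖ ^ θ * (n + 1 : ℝ) ^ (-s.re - θ) := by
        gcongr
        exact Real.rpow_le_self_of_one_le (by norm_num) (by linarith)

theorem summable_nat_add_one_rpow {p : ℝ} (hp : p < -1) :
    Summable fun n : ℕ ↦ (n + 1 : ℝ) ^ p := by
  simpa using (summable_nat_add_iff 1).2 (Real.summable_nat_rpow.2 hp)

theorem exists_norm_tsum_zetaDefect_le (hθ0 : 0 < θ) (hθ1 : θ ≤ 1) :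
    ∃ C > 0, ∀ s : ℂ, s ≠ 1 → 1 - θ / 2 ≤ s.re → ‖∑' n, zetaDefect n s‖ ≤ C * ‖s‖ ^ θ := by
  have hsum := summable_nat_add_one_rpow (p := -1 - θ / 2) (by linarith)
  refine ⟨2 * ∑' n : ℕ, (n + 1 : ℝ) ^ (-1 - θ / 2), ?_, fun s hs1 hs ↦ ?_⟩
  · exact mul_pos two_pos (hsum.tsum_pos (fun n ↦ by positivity) 0 (by positivity))
  · rw [mul_right_comm, ← tsum_mul_left]
    refine tsum_of_norm_bounded (hsum.mul_left _).hasSum fun n ↦ ?_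
    refine (norm_zetaDefect_le hθ0.le hθ1 n hs1 (by linarith)).trans ?_
    have := Real.rpow_le_rpow_of_exponent_le (x := n + 1) (y := -s.re - θ) (z := -1 - θ / 2)
      (by linarith [n.cast_nonneg (α := ℝ)]) (by linarith)
    gcongr

theorem summable_zetaDefect {s : ℂ} (hs1 : s ≠ 1) (hs : 0 < s.re) :
    Summable fun n ↦ zetaDefect n s :=
  .of_norm_bounded ((summable_nat_add_one_rpow (by linarith)).mul_left ‖s‖)
    fun n ↦ norm_zetaDefect_le_norm_mul n hs1 hs

theorem differentiableOn_zetaDefect (n : ℕ) : DifferentiableOn ℂ (zetaDefect n) {1}ᶜ := by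
  intro s hs
  have h1s : 1 - s ≠ 0 := sub_ne_zero.2 (Ne.symm hs)
  have hpow {x : ℝ} (hx : 0 < x) {f : ℂ → ℂ} (hf : DifferentiableAt ℂ f s) :
      DifferentiableAt ℂ (fun z ↦ (x : ℂ) ^ f z) s :=
    hf.const_cpow (Or.inl (ofReal_ne_zero.2 hx.ne'))
  exact ((((hpow (by positivity) (by fun_prop)).sub (hpow (by positivity) (by fun_prop))).div
    (by fun_prop) h1s).sub (hpow (by positivity) (by fun_prop))).differentiableWithinAt

theorem differentiableAt_tsum_zetaDefect {s : ℂ} (hs1 : s ≠ 1) (hs : 0 < s.re) :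
    DifferentiableAt ℂ (fun z ↦ ∑' n, zetaDefect n z) s := by
  set U : Set ℂ := {z | s.re / 2 < z.re} ∩ {1}ᶜ ∩ Metric.ball 0 (‖s‖ + 1)
  have hU : IsOpen U := ((isOpen_lt continuous_const continuous_re).inter
    isOpen_compl_singleton).inter Metric.isOpen_ball
  have hsU : s ∈ U := ⟨⟨half_lt_self hs, hs1⟩, by simp⟩
  refine (differentiableOn_tsum_of_summable_norm
    ((summable_nat_add_one_rpow (p := -(s.re / 2) - 1) (by linarith)).mul_left (‖s‖ + 1))
    (fun n ↦ (differentiableOn_zetaDefect n).mono fun z hz ↦ hz.1.2) hU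
    fun n z hz ↦ ?_).differentiableAt (hU.mem_nhds hsU)
  have hre : s.re / 2 < z.re := hz.1.1
  have hnorm : ‖z‖ ≤ ‖s‖ + 1 := (mem_ball_zero_iff.1 hz.2).le
  refine (norm_zetaDefect_le_norm_mul n hz.1.2 (by linarith)).trans ?_
  gcongr
  linarith [n.cast_nonneg (α := ℝ)]

theorem tendsto_nat_add_one_cpow {s : ℂ} (hs : s.re < 0) :
    Tendsto (fun N : ℕ ↦ ((N : ℂ) + 1) ^ s) atTop (𝓝 0) := by
  rw [tendsto_zero_iff_norm_tendsto_zero]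
  have hnorm (N : ℕ) : ‖((N : ℂ) + 1) ^ s‖ = ((N + 1 : ℕ) : ℝ) ^ (-(-s.re)) := by
    rw [neg_neg, ← norm_natCast_cpow_of_pos N.succ_pos, Nat.cast_succ]
  simp_rw [hnorm]
  exact (tendsto_rpow_neg_atTop (neg_pos.2 hs)).comp
    (tendsto_natCast_atTop_atTop.comp (tendsto_add_atTop_nat 1))

theorem riemannZeta_eq_sub_tsum_zetaDefect {s : ℂ} (hs : 1 < s.re) :
    riemannZeta s = 1 + 1 / (s - 1) - ∑' n, zetaDefect n s := by
  have hs1 : s ≠ 1 := by rintro rfl; simp at hs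
  have hpartial (N : ℕ) : ∑ n ∈ Finset.range N, zetaDefect n s =
      (((N : ℂ) + 1) ^ (1 - s) - 1) / (1 - s) + 1 -
        ∑ n ∈ Finset.range (N + 1), 1 / ((n : ℂ) + 1) ^ s := by
    induction N with
    | zero => simp
    | succ N ih =>
      rw [Finset.sum_range_succ, ih, Finset.sum_range_succ _ (N + 1), zetaDefect, cpow_neg]
      push_cast
      rw [show (N : ℂ) + 1 + 1 = N + 2 by ring]
      ring
  have hzeta : Tendsto (fun N : ℕ ↦ ∑ n ∈ Finset.range (N + 1), 1 / ((n : ℂ) + 1) ^ s) atTop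
      (𝓝 (riemannZeta s)) := by
    rw [zeta_eq_tsum_one_div_nat_add_one_cpow hs]
    have hsum : Summable fun n : ℕ ↦ 1 / ((n : ℂ) + 1) ^ s := by
      simpa using (summable_nat_add_iff 1).2 (summable_one_div_nat_cpow.2 hs)
    exact hsum.hasSum.tendsto_sum_nat.comp (tendsto_add_atTop_nat 1)
  have hlim := tendsto_nhds_unique
    ((summable_zetaDefect hs1 (by linarith)).hasSum.tendsto_sum_nat.congr hpartial)
    (((((tendsto_nat_add_one_cpow (by simpa using hs)).sub_const 1).div_const (1 - s)).add_const
      1).sub hzeta)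
  rw [hlim, ← neg_sub s 1, div_neg]
  ring

theorem mul_rpow_le_mul_rpow (hθ1 : θ ≤ 1) {a x : ℝ} (ha : 1 ≤ a) (hx : 0 ≤ x) :
    (a * x) ^ θ ≤ a * x ^ θ := by
  rw [Real.mul_rpow (by linarith) hx]
  gcongr
  exact Real.rpow_le_self_of_one_le ha hθ1

theorem one_le_norm_sub_one {s : ℂ} (hs : 1 ≤ |s.im|) : 1 ≤ ‖s - 1‖ := by
  refine hs.trans ?_
  simpa using abs_im_le_norm (s - 1)

theorem norm_le_four_mul_abs_im {s : ℂ} (hs0 : 0 ≤ s.re) (hs3 : s.re ≤ 3) (hs : 1 ≤ |s.im|) :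
    ‖s‖ ≤ 4 * |s.im| := by
  have := norm_le_abs_re_add_abs_im s
  rw [abs_of_nonneg hs0] at this
  linarith

theorem exists_norm_riemannZeta_le (hθ0 : 0 < θ) (hθ1 : θ ≤ 1) :
    ∃ C > 0, ∀ s : ℂ, 1 < s.re → s.re ≤ 3 → 1 ≤ |s.im| → ‖riemannZeta s‖ ≤ C * |s.im| ^ θ := by
  obtain ⟨C, hC, hbound⟩ := exists_norm_tsum_zetaDefect_le hθ0 hθ1
  refine ⟨2 + C * 4, by positivity, fun s hs1 hs3 him ↦ ?_⟩
  have hpow : 1 ≤ |s.im| ^ θ := Real.one_le_rpow him hθ0.le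
  have hinv : ‖1 / (s - 1)‖ ≤ 1 := by
    rw [norm_div, norm_one]
    exact div_le_one_of_le₀ (one_le_norm_sub_one him) (norm_nonneg _)
  calc ‖riemannZeta s‖ = ‖1 + 1 / (s - 1) - ∑' n, zetaDefect n s‖ := by
        rw [riemannZeta_eq_sub_tsum_zetaDefect hs1]
    _ ≤ ‖(1 : ℂ)‖ + ‖1 / (s - 1)‖ + ‖∑' n, zetaDefect n s‖ :=
        (norm_sub_le _ _).trans (add_le_add_left (norm_add_le _ _) _)
    _ ≤ 1 + 1 + C * (4 * |s.im|) ^ θ := by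
        rw [norm_one]
        gcongr
        refine (hbound s (by rintro rfl; simp at hs1) (by linarith)).trans ?_
        gcongr
        exact norm_le_four_mul_abs_im (by linarith) hs3 him
    _ ≤ 2 * |s.im| ^ θ + C * (4 * |s.im| ^ θ) := by
        gcongr
        · linarith
        · exact mul_rpow_le_mul_rpow hθ1 (by norm_num) (abs_nonneg _)
    _ = (2 + C * 4) * |s.im| ^ θ := by ring

theorem exists_norm_deriv_tsum_zetaDefect_le (hθ0 : 0 < θ) (hθ1 : θ ≤ 1) :
    ∃ C > 0, ∀ s : ℂ, 1 ≤ s.re → s.re ≤ 3 → 1 ≤ |s.im| →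
      ‖deriv (fun z ↦ ∑' n, zetaDefect n z) s‖ ≤ C * |s.im| ^ θ := by
  obtain ⟨C, hC, hbound⟩ := exists_norm_tsum_zetaDefect_le hθ0 hθ1
  refine ⟨C * 5 / (θ / 2), by positivity, fun s hs1 hs3 him ↦ ?_⟩
  have hre {z : ℂ} (hz : z ∈ Metric.closedBall s (θ / 2)) : 1 - θ / 2 ≤ z.re := by
    have := (abs_re_le_norm (z - s)).trans (mem_closedBall_iff_norm.1 hz)
    rw [sub_re, abs_le] at this
    linarith
  have hne {z : ℂ} (hz : z ∈ Metric.closedBall s (θ / 2)) : z ≠ 1 := by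
    rintro rfl
    have := one_le_norm_sub_one him
    rw [mem_closedBall_iff_norm, norm_sub_rev] at hz
    linarith
  have hdiff : DiffContOnCl ℂ (fun z ↦ ∑' n, zetaDefect n z) (Metric.ball s (θ / 2)) := by
    refine DifferentiableOn.diffContOnCl fun z hz ↦ ?_
    rw [closure_ball s (by positivity)] at hz
    exact (differentiableAt_tsum_zetaDefect (hne hz)
      (by linarith [hre hz])).differentiableWithinAt
  rw [div_mul_eq_mul_div]
  refine norm_deriv_le_of_forall_mem_sphere_norm_le (by positivity) hdiff fun z hz ↦ ?_
  have hz' := Metric.sphere_subset_closedBall hz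
  have hnorm : ‖z‖ ≤ 5 * |s.im| := by
    have := norm_le_four_mul_abs_im (by linarith) hs3 him
    have := norm_le_norm_add_norm_sub' z s
    have := mem_closedBall_iff_norm.1 hz'
    linarith
  calc ‖∑' n, zetaDefect n z‖ ≤ C * (5 * |s.im|) ^ θ :=
        (hbound z (hne hz') (hre hz')).trans (by gcongr)
    _ ≤ C * (5 * |s.im| ^ θ) := by
        gcongr
        exact mul_rpow_le_mul_rpow hθ1 (by norm_num) (abs_nonneg _)
    _ = C * 5 * |s.im| ^ θ := by ring

theorem deriv_riemannZeta_eq {s : ℂ} (hs : 1 < s.re) :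
    deriv riemannZeta s = -1 / (s - 1) ^ 2 - deriv (fun z ↦ ∑' n, zetaDefect n z) s := by
  have hs1 : s ≠ 1 := by rintro rfl; simp at hs
  have heq : riemannZeta =ᶠ[𝓝 s] fun z ↦ 1 + (z - 1)⁻¹ - ∑' n, zetaDefect n z := by
    filter_upwards [(isOpen_lt continuous_const continuous_re).mem_nhds hs] with z hz
    rw [riemannZeta_eq_sub_tsum_zetaDefect hz, one_div]
  have hinv := (((hasDerivAt_id s).sub_const 1).inv (sub_ne_zero.2 hs1)).const_add 1
  exact ((hinv.sub (differentiableAt_tsum_zetaDefect hs1 (by linarith)).hasDerivAt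
    ).congr_of_eventuallyEq heq).deriv

theorem exists_norm_deriv_riemannZeta_le (hθ0 : 0 < θ) (hθ1 : θ ≤ 1) :
    ∃ C > 0, ∀ s : ℂ, 1 < s.re → s.re ≤ 3 → 1 ≤ |s.im| →
      ‖deriv riemannZeta s‖ ≤ C * |s.im| ^ θ := by
  obtain ⟨C, hC, hbound⟩ := exists_norm_deriv_tsum_zetaDefect_le hθ0 hθ1
  refine ⟨1 + C, by positivity, fun s hs1 hs3 him ↦ ?_⟩
  have hpow : 1 ≤ |s.im| ^ θ := Real.one_le_rpow him hθ0.le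
  have hinv : ‖-1 / (s - 1) ^ 2‖ ≤ 1 := by
    rw [norm_div, norm_neg, norm_one, norm_pow]
    exact div_le_one_of_le₀ (one_le_pow₀ (one_le_norm_sub_one him)) (by positivity)
  rw [deriv_riemannZeta_eq hs1]
  refine (norm_sub_le _ _).trans ?_
  linarith [hbound s hs1.le hs3 him]

theorem one_le_norm_riemannZeta_mul {x : ℝ} (hx : 0 < x) (y : ℝ) :
    1 ≤ ‖riemannZeta (1 + x)‖ ^ 3 * ‖riemannZeta (1 + x + I * y)‖ ^ 4 *
      ‖riemannZeta (1 + x + 2 * I * y)‖ := by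
  simpa [DirichletCharacter.LFunction_modOne_eq, DirichletCharacter.LFunctionTrivChar] using
    DirichletCharacter.norm_LFunction_product_ge_one (N := 1) (1 : DirichletCharacter ℂ 1) hx y

theorem exists_norm_riemannZeta_one_add_le :
    ∃ C > 0, ∀ x : ℝ, 0 < x → x ≤ 1 → ‖riemannZeta (1 + x)‖ ≤ C / x := by
  obtain ⟨D, hD⟩ := (isCompact_Icc (a := (0 : ℝ)) (b := 1)).exists_bound_of_continuousOn
    (f := fun x : ℝ ↦ riemannZeta₁ (1 + x))
    (by have := differentiable_riemannZeta₁.continuous; fun_prop)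
  have hD0 : 0 < D := one_pos.trans_le (by simpa using hD 0 (by simp))
  refine ⟨D, hD0, fun x hx hx1 ↦ ?_⟩
  rw [riemannZeta_eq_inv_sub_mul (by simpa using hx.ne'), add_sub_cancel_left, norm_mul, norm_inv,
    norm_real, Real.norm_of_nonneg hx.le, inv_mul_eq_div]
  gcongr
  exact hD x ⟨hx.le, hx1⟩

theorem exists_mul_pow_three_le_norm_riemannZeta_pow (hθ0 : 0 < θ) (hθ1 : θ ≤ 1) :
    ∃ c > 0, ∀ x y : ℝ, 0 < x → x ≤ 1 → 1 ≤ |y| →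
      c * x ^ 3 ≤ ‖riemannZeta (1 + x + I * y)‖ ^ 4 * |y| ^ θ := by
  obtain ⟨D, hD, hpole⟩ := exists_norm_riemannZeta_one_add_le
  obtain ⟨C, hC, hupper⟩ := exists_norm_riemannZeta_le hθ0 hθ1
  refine ⟨1 / (D ^ 3 * (C * 2)), by positivity, fun x y hx hx1 hy ↦ ?_⟩
  have him : |(1 + x + 2 * I * y : ℂ).im| = 2 * |y| := by simp [abs_mul]
  have hdouble : ‖riemannZeta (1 + x + 2 * I * y)‖ ≤ C * (2 * |y| ^ θ) := by
    refine (hupper _ (by simpa using hx) (by simp; linarith) (by rw [him]; linarith)).trans ?_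
    rw [him]
    gcongr
    exact mul_rpow_le_mul_rpow hθ1 (by norm_num) (abs_nonneg y)
  have hprod : 1 ≤ (D / x) ^ 3 * ‖riemannZeta (1 + x + I * y)‖ ^ 4 * (C * (2 * |y| ^ θ)) := by
    refine (one_le_norm_riemannZeta_mul hx y).trans ?_
    have := hpole x hx hx1
    gcongr
  calc 1 / (D ^ 3 * (C * 2)) * x ^ 3 = 1 / (D ^ 3 * (C * 2)) * x ^ 3 * 1 := (mul_one _).symm
    _ ≤ 1 / (D ^ 3 * (C * 2)) * x ^ 3 *
        ((D / x) ^ 3 * ‖riemannZeta (1 + x + I * y)‖ ^ 4 * (C * (2 * |y| ^ θ))) := by gcongr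
    _ = ‖riemannZeta (1 + x + I * y)‖ ^ 4 * |y| ^ θ := by field_simp

theorem exists_le_mul_pow_four_of_lipschitz {c C : ℝ} (hc : 0 < c) (hC : 0 < C) :
    ∃ c' > 0, ∀ M ≥ 1, ∀ f : ℝ → ℝ, (∀ x ∈ Ioc 0 1, 0 ≤ f x ∧ c * x ^ 3 ≤ f x ^ 4 * M) →
      (∀ x ∈ Ioc 0 1, ∀ y ∈ Ioc 0 1, f y - f x ≤ C * M * |y - x|) →
      ∀ x ∈ Ioc 0 1, c' ≤ f x * M ^ 4 := by
  obtain ⟨b, hb0, hb1, hbc⟩ : ∃ b > 0, b ≤ 1 ∧ b ≤ c :=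
    ⟨min 1 c, lt_min one_pos hc, min_le_left _ _, min_le_right _ _⟩
  obtain ⟨k, hk0, hk1, hkb⟩ : ∃ k > 0, k ≤ 1 ∧ k ≤ b / (2 * C) :=
    ⟨min 1 (b / (2 * C)), lt_min one_pos (by positivity), min_le_left _ _, min_le_right _ _⟩
  refine ⟨b * k ^ 3 / 2, by positivity, fun M hM f hf hlip x hx ↦ ?_⟩
  obtain ⟨δ, hδ⟩ : ∃ δ, δ = k ^ 4 / M ^ 5 := ⟨_, rfl⟩
  have hδmem : δ ∈ Ioc 0 1 := by
    refine ⟨by rw [hδ]; positivity, ?_⟩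
    rw [hδ, div_le_one (by positivity)]
    exact (pow_le_one₀ hk0.le hk1).trans (one_le_pow₀ hM)
  have hright {y : ℝ} (hy : y ∈ Ioc 0 1) (hδy : δ ≤ y) : b * k ^ 3 ≤ f y * M ^ 4 := by
    have hfy := (hf y hy).1
    have hδ0 := hδmem.1.le
    refine le_of_pow_le_pow_left₀ (n := 4) (by norm_num) (by positivity) ?_
    calc (b * k ^ 3) ^ 4 = b ^ 4 * δ ^ 3 * M ^ 15 := by rw [hδ]; field_simp
      _ ≤ c * y ^ 3 * M ^ 15 := by
          gcongr
          exact (pow_le_of_le_one hb0.le hb1 (by norm_num)).trans hbc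
      _ ≤ f y ^ 4 * M * M ^ 15 := mul_le_mul_of_nonneg_right (hf y hy).2 (by positivity)
      _ = (f y * M ^ 4) ^ 4 := by ring
  rcases le_total δ x with hδx | hxδ
  · linarith [hright hx hδx, show 0 < b * k ^ 3 by positivity]
  · have hdist : |δ - x| ≤ δ := by rw [abs_of_nonneg (by linarith)]; linarith [hx.1]
    have hCk : C * k ≤ b / 2 := by rw [le_div_iff₀ (by positivity)] at hkb; linarith
    have hdrop : (f δ - f x) * M ^ 4 ≤ b / 2 * k ^ 3 := calc
      (f δ - f x) * M ^ 4 ≤ C * M * δ * M ^ 4 := by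
        gcongr; exact (hlip x hx δ hδmem).trans (by gcongr)
      _ = C * k * k ^ 3 := by rw [hδ]; field_simp
      _ ≤ b / 2 * k ^ 3 := by gcongr
    linarith [hright hδmem le_rfl]

theorem norm_riemannZeta_sub_le {y B : ℝ}
    (hB : ∀ s : ℂ, 1 < s.re → s.re ≤ 3 → s.im = y → ‖deriv riemannZeta s‖ ≤ B) {a b : ℝ}
    (ha : a ∈ Ioc (0 : ℝ) 1) (hb : b ∈ Ioc (0 : ℝ) 1) :
    ‖riemannZeta (1 + b + I * y) - riemannZeta (1 + a + I * y)‖ ≤ B * |b - a| := by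
  have hmem {x : ℝ} (hx : x ∈ Ioc (0 : ℝ) 1) : (1 + x + I * y : ℂ) ∈ Ioc (1 : ℝ) 3 ×ℂ {y} := by
    rw [mem_reProdIm]
    refine ⟨⟨?_, ?_⟩, ?_⟩ <;> simp <;> linarith [hx.1, hx.2]
  have hconv : Convex ℝ (Ioc (1 : ℝ) 3 ×ℂ {y}) :=
    ((convex_Ioc (1 : ℝ) 3).linear_preimage reLm).inter ((convex_singleton y).linear_preimage imLm)
  have hlip := hconv.norm_image_sub_le_of_norm_deriv_le (𝕜 := ℂ) (f := riemannZeta)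
    (fun s hs ↦ differentiableAt_riemannZeta (by rintro rfl; simp [mem_reProdIm] at hs))
    (fun s hs ↦ hB s hs.1.1 hs.1.2 hs.2) (hmem ha) (hmem hb)
  rwa [show (1 + b + I * y : ℂ) - (1 + a + I * y) = ((b - a : ℝ) : ℂ) by push_cast; ring,
    norm_real, Real.norm_eq_abs] at hlip

theorem exists_le_norm_riemannZeta_mul (hθ0 : 0 < θ) (hθ1 : θ ≤ 1) :
    ∃ c > 0, ∀ s : ℂ, 1 < s.re → s.re ≤ 2 → 1 ≤ |s.im| →
      c ≤ ‖riemannZeta s‖ * (|s.im| ^ θ) ^ 4 := by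
  obtain ⟨c, hc, hpow⟩ := exists_mul_pow_three_le_norm_riemannZeta_pow hθ0 hθ1
  obtain ⟨C, hC, hderiv⟩ := exists_norm_deriv_riemannZeta_le hθ0 hθ1
  obtain ⟨c', hc', hlower⟩ := exists_le_mul_pow_four_of_lipschitz hc hC
  refine ⟨c', hc', fun s hs1 hs2 him ↦ ?_⟩
  have hs : s = 1 + ((s.re - 1 : ℝ) : ℂ) + I * s.im := by apply Complex.ext <;> simp
  rw [congrArg riemannZeta hs]
  refine hlower _ (Real.one_le_rpow him hθ0.le) (fun x ↦ ‖riemannZeta (1 + x + I * s.im)‖)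
    (fun x hx ↦ ⟨norm_nonneg _, hpow x s.im hx.1 hx.2 him⟩) (fun x hx y hy ↦ ?_) (s.re - 1)
    ⟨by linarith, by linarith⟩
  refine (norm_sub_norm_le _ _).trans (norm_riemannZeta_sub_le (fun z hz1 hz3 hz ↦ ?_) hx hy)
  rw [← hz] at him ⊢
  exact hderiv z hz1 hz3 him

end ZetaBounds

section InvZetaRemainder

open Complex Set Filter Topology

theorem riemannZeta₁_one_add_ne_zero {s : ℂ} (hs : 0 ≤ s.re) : riemannZeta₁ (1 + s) ≠ 0 := by
  rcases eq_or_ne s 0 with rfl | hs0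
  · simp
  · have hzeta := riemannZeta_ne_zero_of_one_le_re (s := 1 + s) (by simpa using hs)
    rw [riemannZeta_eq_inv_sub_mul (by simpa using hs0)] at hzeta
    exact right_ne_zero_of_mul hzeta

/-- The function `s ↦ (s ^ 2 * ζ (1 + s))⁻¹ - s⁻¹`, with its singularity at `0` removed. It is the
Mellin transform of the error term in the asymptotics of `logMean moebius`. -/
noncomputable def invZetaRemainder (s : ℂ) : ℂ := -riemannZeta₀ (1 + s) / riemannZeta₁ (1 + s)

theorem invZetaRemainder_eq {s : ℂ} (hs0 : s ≠ 0) (hs : riemannZeta (1 + s) ≠ 0) :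
    invZetaRemainder s = (s ^ 2 * riemannZeta (1 + s))⁻¹ - s⁻¹ := by
  have hsum := riemannZeta_eq_inv_sub_add (s := 1 + s) (by simpa using hs0)
  have hmul := riemannZeta_eq_inv_sub_mul (s := 1 + s) (by simpa using hs0)
  rw [add_sub_cancel_left] at hsum hmul
  rw [invZetaRemainder, eq_sub_of_add_eq' hsum.symm, (inv_mul_eq_iff_eq_mul₀ hs0).1 hmul.symm]
  field_simp
  ring

theorem differentiableOn_invZetaRemainder :
    DifferentiableOn ℂ invZetaRemainder {s | riemannZeta₁ (1 + s) ≠ 0} := fun s hs ↦ by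
  have hnum : DifferentiableAt ℂ (fun z ↦ -riemannZeta₀ (1 + z)) s := by
    have := differentiable_riemannZeta₀
    fun_prop
  have hden : DifferentiableAt ℂ (fun z ↦ riemannZeta₁ (1 + z)) s := by
    have := differentiable_riemannZeta₁
    fun_prop
  exact (hnum.div hden hs).differentiableWithinAt

theorem isOpen_riemannZeta₁_one_add_ne_zero : IsOpen {s : ℂ | riemannZeta₁ (1 + s) ≠ 0} := by
  have := differentiable_riemannZeta₁.continuous
  exact isOpen_ne_fun (by fun_prop) continuous_const

theorem exists_norm_deriv_invZetaRemainder_le_of_abs_im_le_one :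
    ∃ C, ∀ s : ℂ, 0 ≤ s.re → s.re ≤ 1 → |s.im| ≤ 1 → ‖deriv invZetaRemainder s‖ ≤ C := by
  have hcont := (differentiableOn_invZetaRemainder.deriv
    isOpen_riemannZeta₁_one_add_ne_zero).continuousOn
  obtain ⟨C, hC⟩ := (isCompact_Icc.reProdIm isCompact_Icc).exists_bound_of_continuousOn
    (hcont.mono fun s (hs : s ∈ Icc (0 : ℝ) 1 ×ℂ Icc (-1 : ℝ) 1) ↦
      riemannZeta₁_one_add_ne_zero hs.1.1)
  exact ⟨C, fun s hs0 hs1 him ↦ hC s ⟨⟨hs0, hs1⟩, abs_le.1 him⟩⟩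

theorem deriv_invZetaRemainder {s : ℂ} (hs : 0 < s.re) :
    deriv invZetaRemainder s = s⁻¹ ^ 2 * (1 - (2 * s⁻¹ * (riemannZeta (1 + s))⁻¹ +
      deriv riemannZeta (1 + s) * (riemannZeta (1 + s))⁻¹ ^ 2)) := by
  have hs0 : s ≠ 0 := by rintro rfl; simp at hs
  have hzeta : riemannZeta (1 + s) ≠ 0 :=
    riemannZeta_ne_zero_of_one_le_re (by simpa using hs.le)
  have hzeta' : HasDerivAt (fun z ↦ riemannZeta (1 + z)) (deriv riemannZeta (1 + s)) s :=
    (differentiableAt_riemannZeta (by simpa using hs0)).hasDerivAt.comp_const_add 1 s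
  have heq : invZetaRemainder =ᶠ[𝓝 s] fun z ↦ (z ^ 2 * riemannZeta (1 + z))⁻¹ - z⁻¹ := by
    filter_upwards [isOpen_ne.mem_nhds hs0, hzeta'.continuousAt.eventually_ne hzeta] with z hz0 hz
    exact invZetaRemainder_eq hz0 hz
  have hderiv := (((hasDerivAt_pow 2 s).mul hzeta').inv
    (mul_ne_zero (pow_ne_zero 2 hs0) hzeta)).sub (hasDerivAt_inv hs0)
  rw [(hderiv.congr_of_eventuallyEq heq).deriv, Pi.mul_apply]
  push_cast
  field_simp
  ring

theorem norm_one_sub_two_inv_mul_inv_add_le {s z z' : ℂ} {c C M : ℝ} (hc : 0 < c) (hM : 1 ≤ M)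
    (hs : 1 ≤ ‖s‖) (hz : c ≤ ‖z‖ * M ^ 4) (hz' : ‖z'‖ ≤ C * M) :
    ‖1 - (2 * s⁻¹ * z⁻¹ + z' * z⁻¹ ^ 2)‖ ≤ (1 + (2 / c + C / c ^ 2)) * M ^ 9 := by
  have hM9 : 1 ≤ M ^ 9 := one_le_pow₀ hM
  have hC : 0 ≤ C := nonneg_of_mul_nonneg_left ((norm_nonneg z').trans hz') (by linarith)
  have hz0 : 0 < ‖z‖ := pos_of_mul_pos_left (hc.trans_le hz) (by positivity)
  have hzinv : ‖z⁻¹‖ ≤ M ^ 4 / c := by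
    rw [norm_inv, inv_le_comm₀ hz0 (by positivity), inv_div, div_le_iff₀ (by positivity)]
    exact hz
  have hsinv : ‖s⁻¹‖ ≤ 1 := by
    rw [norm_inv]
    exact inv_le_one_of_one_le₀ hs
  have hfst : ‖2 * s⁻¹ * z⁻¹‖ ≤ 2 / c * M ^ 9 := calc
    ‖2 * s⁻¹ * z⁻¹‖ ≤ 2 * 1 * (M ^ 4 / c) := by
      rw [norm_mul, norm_mul, norm_ofNat]
      gcongr
    _ ≤ 2 * 1 * (M ^ 9 / c) := by gcongr; norm_num
    _ = 2 / c * M ^ 9 := by ring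
  have hsnd : ‖z' * z⁻¹ ^ 2‖ ≤ C / c ^ 2 * M ^ 9 := calc
    ‖z' * z⁻¹ ^ 2‖ ≤ C * M * (M ^ 4 / c) ^ 2 := by
      rw [norm_mul, norm_pow]
      gcongr
    _ = C / c ^ 2 * M ^ 9 := by ring
  calc ‖1 - (2 * s⁻¹ * z⁻¹ + z' * z⁻¹ ^ 2)‖ ≤ ‖(1 : ℂ)‖ + (‖2 * s⁻¹ * z⁻¹‖ + ‖z' * z⁻¹ ^ 2‖) :=
        (norm_sub_le _ _).trans (add_le_add_right (norm_add_le _ _) _)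
    _ ≤ 1 * M ^ 9 + (2 / c * M ^ 9 + C / c ^ 2 * M ^ 9) := by rw [norm_one, one_mul]; gcongr
    _ = (1 + (2 / c + C / c ^ 2)) * M ^ 9 := by ring

-- The exponent `1 / 18` makes the ninth power of `|im s| ^ (1 / 18)` equal to `|im s| ^ (1 / 2)`.
theorem exists_norm_deriv_invZetaRemainder_le_of_one_le_abs_im :
    ∃ C > 0, ∀ s : ℂ, 0 < s.re → s.re ≤ 1 → 1 ≤ |s.im| →
      ‖deriv invZetaRemainder s‖ ≤ C * |s.im| ^ (-(3 / 2) : ℝ) := by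
  obtain ⟨c, hc, hlower⟩ := exists_le_norm_riemannZeta_mul (θ := 1 / 18) (by norm_num) (by norm_num)
  obtain ⟨C, hC, hderiv⟩ :=
    exists_norm_deriv_riemannZeta_le (θ := 1 / 18) (by norm_num) (by norm_num)
  refine ⟨1 + (2 / c + C / c ^ 2), by positivity, fun s hs hs1 him ↦ ?_⟩
  have hnorm : |s.im| ≤ ‖s‖ := abs_im_le_norm s
  have him' : (1 + s).im = s.im := by simp
  have hre' : (1 + s).re = 1 + s.re := by simp
  have hbracket := norm_one_sub_two_inv_mul_inv_add_le hc
    (Real.one_le_rpow him (z := 1 / 18) (by norm_num)) (him.trans hnorm)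
    (by simpa only [him'] using hlower (1 + s) (by linarith) (by linarith) (by rwa [him']))
    (by simpa only [him'] using hderiv (1 + s) (by linarith) (by linarith) (by rwa [him']))
  have hpow : |s.im|⁻¹ ^ 2 * (|s.im| ^ (1 / 18 : ℝ)) ^ 9 = |s.im| ^ (-(3 / 2) : ℝ) := by
    have him0 : 0 < |s.im| := by linarith
    rw [← Real.rpow_mul_natCast him0.le, inv_pow, ← Real.rpow_natCast, ← Real.rpow_neg him0.le,
      ← Real.rpow_add him0]
    norm_num
  rw [deriv_invZetaRemainder hs, ← hpow, norm_mul, norm_pow, norm_inv, mul_left_comm]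
  gcongr

theorem exists_norm_deriv_invZetaRemainder_le :
    ∃ C > 0, ∀ s : ℂ, 0 < s.re → s.re ≤ 1 →
      ‖deriv invZetaRemainder s‖ ≤ C * (1 + |s.im|) ^ (-(3 / 2) : ℝ) := by
  obtain ⟨B, hB⟩ := exists_norm_deriv_invZetaRemainder_le_of_abs_im_le_one
  obtain ⟨C, hC, hbound⟩ := exists_norm_deriv_invZetaRemainder_le_of_one_le_abs_im
  have hB0 : 0 ≤ B := (norm_nonneg _).trans (hB 0 (by simp) (by simp) (by simp))
  refine ⟨(B + C) / 2 ^ (-(3 / 2) : ℝ), by positivity, fun s hs hs1 ↦ ?_⟩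
  have hmax : ‖deriv invZetaRemainder s‖ ≤ (B + C) * max 1 |s.im| ^ (-(3 / 2) : ℝ) := by
    rcases le_total |s.im| 1 with him | him
    · rw [max_eq_left him, Real.one_rpow, mul_one]
      linarith [hB s hs.le hs1 him]
    · rw [max_eq_right him]
      refine (hbound s hs hs1 him).trans ?_
      gcongr
      linarith
  refine hmax.trans ?_
  rw [div_mul_eq_mul_div, mul_div_assoc, ← Real.div_rpow (by positivity) (by norm_num)]
  refine mul_le_mul_of_nonneg_left ?_ (by positivity)
  refine Real.rpow_le_rpow_of_nonpos (by positivity) ?_ (by norm_num)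
  linarith [le_max_left 1 |s.im|, le_max_right 1 |s.im|]

end InvZetaRemainder

section Mellin

open Set MeasureTheory

variable {E : Type*} [NormedAddCommGroup E] [NormedSpace ℂ E]

theorem integral_norm_cpow_smul_comp_mul_left (f : ℝ → E) (s : ℂ) {c : ℝ} (hc : 0 < c) :
    ∫ t in Ioi (0 : ℝ), ‖(t : ℂ) ^ (s - 1) • f (c * t)‖ =
      c ^ (-s.re) * ∫ t in Ioi (0 : ℝ), ‖(t : ℂ) ^ (s - 1) • f t‖ := by
  have hscale : ∀ t ∈ Ioi (0 : ℝ), ‖(t : ℂ) ^ (s - 1) • f (c * t)‖ =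
      c ^ (1 - s.re) * ‖((c * t : ℝ) : ℂ) ^ (s - 1) • f (c * t)‖ := by
    intro t (ht : 0 < t)
    rw [norm_smul, norm_smul, Complex.norm_cpow_eq_rpow_re_of_pos ht,
      Complex.norm_cpow_eq_rpow_re_of_pos (mul_pos hc ht), Real.mul_rpow hc.le ht.le, ← mul_assoc,
      ← mul_assoc, ← Real.rpow_add hc]
    simp
  rw [setIntegral_congr_fun measurableSet_Ioi hscale, integral_const_mul,
    integral_comp_mul_left_Ioi (fun t ↦ ‖(t : ℂ) ^ (s - 1) • f t‖) 0 hc, mul_zero, smul_eq_mul,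
    ← mul_assoc, ← Real.rpow_neg_one c, ← Real.rpow_add hc]
  ring_nf

theorem hasSum_mellin_smul_comp_mul_left {f : ℝ → E} {a : ℕ → ℂ} {s : ℂ} (ha₀ : a 0 = 0)
    (hf : MellinConvergent f s) (ha : LSeriesSummable a s) :
    HasSum (fun n ↦ LSeries.term a s n • mellin f s)
      (mellin (fun t ↦ ∑' n, a n • f (n * t)) s) := by
  have hcomm (n : ℕ) (t : ℝ) : (t : ℂ) ^ (s - 1) • a n • f (n * t) =
      a n • (t : ℂ) ^ (s - 1) • f (n * t) := smul_comm _ _ _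
  have hint (n : ℕ) : Integrable (fun t : ℝ ↦ (t : ℂ) ^ (s - 1) • a n • f (n * t))
      (volume.restrict (Ioi 0)) := by
    simp only [hcomm]
    rcases n.eq_zero_or_pos with rfl | hn
    · simp [ha₀]
    · exact ((MellinConvergent.comp_mul_left (Nat.cast_pos.2 hn)).2 hf).smul (a n)
  have hnorm (n : ℕ) : ∫ t in Ioi (0 : ℝ), ‖(t : ℂ) ^ (s - 1) • a n • f (n * t)‖ =
      ‖LSeries.term a s n‖ * ∫ t in Ioi (0 : ℝ), ‖(t : ℂ) ^ (s - 1) • f t‖ := by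
    simp only [hcomm, norm_smul (a n), integral_const_mul]
    rcases n.eq_zero_or_pos with rfl | hn
    · simp [ha₀]
    · rw [integral_norm_cpow_smul_comp_mul_left f s (Nat.cast_pos.2 hn), LSeries.norm_term_eq,
        if_neg hn.ne', Real.rpow_neg (Nat.cast_nonneg n), div_eq_mul_inv, mul_assoc]
  have hvalue (n : ℕ) : ∫ t in Ioi (0 : ℝ), (t : ℂ) ^ (s - 1) • a n • f (n * t) =
      LSeries.term a s n • mellin f s := by
    simp only [hcomm, integral_smul]
    rcases n.eq_zero_or_pos with rfl | hn
    · simp [ha₀]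
    · change a n • mellin (fun t ↦ f (n * t)) s = _
      rw [mellin_comp_mul_left f s (Nat.cast_pos.2 hn), LSeries.term_of_ne_zero hn.ne', smul_smul,
        Complex.ofReal_natCast, Complex.cpow_neg, div_eq_mul_inv]
  have hsum := hasSum_integral_of_summable_integral_norm hint
    (by simpa only [hnorm] using ha.norm.mul_right _)
  simpa only [hvalue, mellin, tsum_const_smul''] using hsum

theorem mellin_tsum_smul_comp_mul_left {f : ℝ → E} {a : ℕ → ℂ} {s : ℂ} (ha₀ : a 0 = 0)
    (hf : MellinConvergent f s) (ha : LSeriesSummable a s) :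
    mellin (fun t ↦ ∑' n, a n • f (n * t)) s = LSeries a s • mellin f s :=
  (hasSum_mellin_smul_comp_mul_left ha₀ hf ha).unique (ha.hasSum.smul_const _)

theorem norm_le_rpow_mul_integral_norm_mellin [CompleteSpace E] {f : ℝ → E} {σ x : ℝ} (hx : 0 < x)
    (hf : MellinConvergent f σ) (hF : Complex.VerticalIntegrable (mellin f) σ)
    (hfx : ContinuousAt f x) :
    ‖f x‖ ≤ x ^ (-σ) * ∫ y : ℝ, ‖mellin f (σ + y * Complex.I)‖ := by
  have hpi : ‖(1 / (2 * Real.pi) : ℝ)‖ ≤ 1 := by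
    rw [Real.norm_of_nonneg (by positivity), div_le_one (by positivity)]
    linarith [Real.pi_gt_three]
  calc ‖f x‖ = ‖mellinInv σ (mellin f) x‖ := by rw [mellinInv_mellin_eq σ f hx hf hF hfx]
    _ ≤ ‖∫ y : ℝ, (x : ℂ) ^ (-(σ + y * Complex.I)) • mellin f (σ + y * Complex.I)‖ := by
        rw [mellinInv, norm_smul]
        exact mul_le_of_le_one_left (norm_nonneg _) hpi
    _ ≤ ∫ y : ℝ, ‖(x : ℂ) ^ (-(σ + y * Complex.I)) • mellin f (σ + y * Complex.I)‖ :=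
        norm_integral_le_integral_norm _
    _ = x ^ (-σ) * ∫ y : ℝ, ‖mellin f (σ + y * Complex.I)‖ := by
        simp [norm_smul, Complex.norm_cpow_eq_rpow_re_of_pos hx, integral_const_mul]

end Mellin

section LogMeanMellin

open Finset ArithmeticFunction
open Real (posLog)

theorem div_mul_posLog_div_eq_zero (a : ArithmeticFunction ℝ) {x : ℝ} (hx : 0 ≤ x) {n : ℕ}
    (hn : n ∉ Icc 1 ⌊x⌋₊) : a n / n * posLog (x / n) = 0 := by
  rcases n.eq_zero_or_pos with rfl | hn₀
  · simp
  have hxn : x < n := (Nat.floor_lt hx).1 <| not_le.1 fun h ↦ hn (mem_Icc.2 ⟨hn₀, h⟩)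
  rw [Real.posLog_eq_zero_iff _ |>.2, mul_zero]
  rw [abs_of_nonneg (by positivity)]
  exact div_le_one_of_le₀ hxn.le n.cast_nonneg

theorem logMean_eq_sum_posLog (a : ArithmeticFunction ℝ) {x : ℝ} (hx : 0 ≤ x) :
    logMean a x = ∑ n ∈ Icc 1 ⌊x⌋₊, a n / n * posLog (x / n) := by
  refine sum_congr rfl fun n hn ↦ ?_
  obtain ⟨hn₁, hnx⟩ := mem_Icc.1 hn
  have : 1 ≤ x / n := (one_le_div (Nat.cast_pos.2 hn₁)).2 ((Nat.le_floor_iff hx).1 hnx)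
  rw [Real.posLog_eq_log (this.trans (le_abs_self _))]

theorem logMean_eq_tsum_posLog (a : ArithmeticFunction ℝ) {x : ℝ} (hx : 0 ≤ x) :
    logMean a x = ∑' n : ℕ, a n / n * posLog (x / n) := by
  rw [logMean_eq_sum_posLog a hx, tsum_eq_sum fun n hn ↦ div_mul_posLog_div_eq_zero a hx hn]

theorem continuousAt_logMean (a : ArithmeticFunction ℝ) {x : ℝ} (hx : 0 < x) :
    ContinuousAt (logMean a) x := by
  obtain ⟨N, hN⟩ := exists_nat_gt x
  have hloc : logMean a =ᶠ[nhds x] fun y ↦ ∑ n ∈ Icc 1 N, a n / n * posLog (y / n) := by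
    filter_upwards [lt_mem_nhds hx, gt_mem_nhds hN] with y hy₀ hyN
    rw [logMean_eq_sum_posLog a hy₀.le]
    exact sum_subset (Icc_subset_Icc_right <| (Nat.floor_lt hy₀.le).2 hyN |>.le)
      fun n _ hn ↦ div_mul_posLog_div_eq_zero a hy₀.le hn
  refine ContinuousAt.congr (Continuous.continuousAt ?_) hloc.symm
  fun_prop

theorem abs_logMean_le {a : ArithmeticFunction ℝ} (ha : ∀ n, |a n| ≤ 1) {b x : ℝ} (hb : 0 < b)
    (hx : 0 ≤ x) : |logMean a x| ≤ (∑' n : ℕ, (n : ℝ) ^ (-1 - b)) / b * x ^ b := by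
  have hterm : ∀ n ∈ Icc 1 ⌊x⌋₊,
      |a n / n * Real.log (x / n)| ≤ (n : ℝ) ^ (-1 - b) * (x ^ b / b) := by
    intro n hn
    obtain ⟨hn₁, hnx⟩ := mem_Icc.1 hn
    have hn₀ : (0 : ℝ) < n := Nat.cast_pos.2 hn₁
    have hlog : 0 ≤ Real.log (x / n) :=
      Real.log_nonneg ((one_le_div hn₀).2 ((Nat.le_floor_iff hx).1 hnx))
    calc |a n / n * Real.log (x / n)| = |a n| / n * Real.log (x / n) := by
          rw [abs_mul, abs_div, abs_of_pos hn₀, abs_of_nonneg hlog]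
      _ ≤ 1 / n * ((x / n) ^ b / b) := by
          gcongr
          · exact ha n
          · exact Real.log_le_rpow_div (by positivity) hb
      _ = (n : ℝ) ^ (-1 - b) * (x ^ b / b) := by
          rw [Real.div_rpow hx hn₀.le, Real.rpow_sub hn₀, Real.rpow_neg_one]
          ring
  have hsummable : Summable fun n : ℕ ↦ (n : ℝ) ^ (-1 - b) :=
    Real.summable_nat_rpow.2 (by linarith)
  calc |logMean a x| ≤ ∑ n ∈ Icc 1 ⌊x⌋₊, (n : ℝ) ^ (-1 - b) * (x ^ b / b) :=
        (abs_sum_le_sum_abs _ _).trans (sum_le_sum hterm)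
    _ = (∑ n ∈ Icc 1 ⌊x⌋₊, (n : ℝ) ^ (-1 - b)) * (x ^ b / b) := (sum_mul _ _ _).symm
    _ ≤ (∑' n : ℕ, (n : ℝ) ^ (-1 - b)) * (x ^ b / b) := by
        gcongr
        exact hsummable.sum_le_tsum _ fun n _ ↦ by positivity
    _ = (∑' n : ℕ, (n : ℝ) ^ (-1 - b)) / b * x ^ b := by ring

theorem isBigO_atTop_rpow_of_eq_zero_of_one_lt {f : ℝ → ℂ} (hf : ∀ t, 1 < t → f t = 0) (r : ℝ) :
    f =O[Filter.atTop] fun t : ℝ ↦ t ^ r := by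
  refine (Asymptotics.isBigO_zero _ _).congr' ?_ Filter.EventuallyEq.rfl
  filter_upwards [Filter.eventually_gt_atTop 1] with t ht using (hf t ht).symm

theorem locallyIntegrableOn_indicator_Ioc (S : Set ℝ) :
    MeasureTheory.LocallyIntegrableOn ((Set.Ioc (0 : ℝ) 1).indicator fun _ ↦ (1 : ℂ)) S := by
  refine (MeasureTheory.Integrable.locallyIntegrable ?_).locallyIntegrableOn S
  rw [MeasureTheory.integrable_indicator_iff measurableSet_Ioc]
  exact MeasureTheory.integrableOn_const (by simp)

theorem hasMellin_log_smul_indicator_Ioc {s : ℂ} (hs : 0 < s.re) :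
    HasMellin (fun t ↦ Real.log t • (Set.Ioc (0 : ℝ) 1).indicator (fun _ ↦ (1 : ℂ)) t) s
      (-(s ^ 2)⁻¹) := by
  have hs₀ : s ≠ 0 := by rintro rfl; simp at hs
  have hbot : ((Set.Ioc (0 : ℝ) 1).indicator fun _ ↦ (1 : ℂ))
      =O[nhdsWithin 0 (Set.Ioi 0)] fun t : ℝ ↦ t ^ (-0 : ℝ) := by
    refine Asymptotics.IsBigO.of_bound 1 (.of_forall fun t ↦ ?_)
    by_cases ht : t ∈ Set.Ioc (0 : ℝ) 1 <;> simp [ht]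
  obtain ⟨hconv, hderiv⟩ := mellin_hasDerivAt_of_isBigO_rpow (locallyIntegrableOn_indicator_Ioc _)
    (isBigO_atTop_rpow_of_eq_zero_of_one_lt (fun t ht ↦ by simp [ht]) _) (lt_add_one s.re) hbot hs
  refine ⟨hconv, hderiv.unique ((hasDerivAt_inv hs₀).congr_of_eventuallyEq ?_)⟩
  filter_upwards [(isOpen_lt continuous_const Complex.continuous_re).mem_nhds hs] with z hz
  rw [(hasMellin_one_Ioc hz).2, one_div]

theorem hasMellin_posLog_inv {s : ℂ} (hs : 0 < s.re) :
    HasMellin (fun t ↦ (posLog t⁻¹ : ℂ)) s (s ^ 2)⁻¹ := by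
  have heq : ∀ t ∈ Set.Ioi (0 : ℝ), (posLog t⁻¹ : ℂ) =
      (-1 : ℂ) • Real.log t • (Set.Ioc (0 : ℝ) 1).indicator (fun _ ↦ (1 : ℂ)) t := by
    intro t (ht : 0 < t)
    rcases le_or_gt t 1 with ht₁ | ht₁
    · rw [Real.posLog_eq_log (by rw [abs_of_pos (by positivity)]; exact (one_le_inv₀ ht).2 ht₁)]
      simp [ht, ht₁]
    · rw [(Real.posLog_eq_zero_iff _).2
        (by rw [abs_of_pos (by positivity)]; exact inv_le_one_of_one_le₀ ht₁.le)]
      simp [ht₁]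
  have hsmul := hasMellin_log_smul_indicator_Ioc hs
  refine ⟨(hsmul.1.const_smul (-1 : ℂ)).congr_fun (fun t ht ↦ ?_) measurableSet_Ioi, ?_⟩
  · simp only [heq t ht]
  · calc mellin (fun t ↦ (posLog t⁻¹ : ℂ)) s = mellin (fun t ↦ (-1 : ℂ) • Real.log t •
          (Set.Ioc (0 : ℝ) 1).indicator (fun _ ↦ (1 : ℂ)) t) s :=
          MeasureTheory.setIntegral_congr_fun measurableSet_Ioi fun t ht ↦ by simp only [heq t ht]
      _ = (s ^ 2)⁻¹ := by rw [mellin_const_smul, hsmul.2, neg_one_smul, neg_neg]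

theorem LSeries_term_div_natCast (f : ℕ → ℂ) (s : ℂ) (n : ℕ) :
    LSeries.term (fun n ↦ f n / n) s n = LSeries.term f (1 + s) n := by
  rcases n.eq_zero_or_pos with rfl | hn
  · simp
  · rw [LSeries.term_of_ne_zero hn.ne', LSeries.term_of_ne_zero hn.ne',
      Complex.cpow_add _ _ (Nat.cast_ne_zero.2 hn.ne'), Complex.cpow_one, div_div]

theorem mellin_logMean_inv (a : ArithmeticFunction ℝ) {s : ℂ} (hs : 0 < s.re)
    (ha : LSeriesSummable (fun n ↦ (a n : ℂ)) (1 + s)) :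
    mellin (fun t ↦ (logMean a t⁻¹ : ℂ)) s = LSeries (fun n ↦ (a n : ℂ)) (1 + s) * (s ^ 2)⁻¹ := by
  have hterm : LSeries.term (fun n ↦ (a n : ℂ) / n) s = LSeries.term (fun n ↦ (a n : ℂ)) (1 + s) :=
    funext fun n ↦ LSeries_term_div_natCast (fun n ↦ (a n : ℂ)) s n
  have hsummable : LSeriesSummable (fun n ↦ (a n : ℂ) / n) s := by
    rw [LSeriesSummable, hterm]; exact ha
  have hposLog := hasMellin_posLog_inv hs
  calc mellin (fun t ↦ (logMean a t⁻¹ : ℂ)) s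
      = mellin (fun t ↦ ∑' n : ℕ, ((a n : ℂ) / n) • (posLog (n * t)⁻¹ : ℂ)) s := by
        refine MeasureTheory.setIntegral_congr_fun measurableSet_Ioi fun t (ht : 0 < t) ↦ ?_
        simp only [logMean_eq_tsum_posLog a (inv_pos.2 ht).le, Complex.ofReal_tsum, smul_eq_mul,
          mul_inv_rev, div_eq_mul_inv, Complex.ofReal_mul, Complex.ofReal_inv,
          Complex.ofReal_natCast]
    _ = LSeries (fun n ↦ (a n : ℂ)) (1 + s) * (s ^ 2)⁻¹ := by
        rw [mellin_tsum_smul_comp_mul_left (by simp) hposLog.1 hsummable, hposLog.2, smul_eq_mul,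
          LSeries, hterm, LSeries]

theorem mellin_logMean_moebius_inv {s : ℂ} (hs : 0 < s.re) :
    mellin (fun t ↦ (logMean (moebius : ArithmeticFunction ℤ) t⁻¹ : ℂ)) s =
      (s ^ 2 * riemannZeta (1 + s))⁻¹ := by
  have hre : 1 < (1 + s).re := by simpa using hs
  have hinv : LSeries (fun n ↦ (moebius n : ℂ)) (1 + s) = (riemannZeta (1 + s))⁻¹ := by
    rw [← LSeries_zeta_eq_riemannZeta hre]
    exact eq_inv_of_mul_eq_one_right (LSeries_zeta_mul_Lseries_moebius hre)
  have hsummable := LSeriesSummable_moebius_iff.2 hre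
  have h := mellin_logMean_inv (moebius : ArithmeticFunction ℤ) hs (by simpa using hsummable)
  simp only [intCoe_apply, Complex.ofReal_intCast, hinv] at h
  rw [h, mul_inv, mul_comm]

end LogMeanMellin

section MoebiusError

open Set MeasureTheory ArithmeticFunction Asymptotics

/-- The error `logMean μ x - 1` as a function of `t = 1 / x ∈ (0, 1]`, extended by zero to `t > 1`:
this is the function whose Mellin transform is `invZetaRemainder`. -/
noncomputable def moebiusError (t : ℝ) : ℂ :=
  (logMean (moebius : ArithmeticFunction ℤ) t⁻¹ : ℂ) - (Ioc (0 : ℝ) 1).indicator (fun _ ↦ 1) t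

theorem moebiusError_inv {x : ℝ} (hx : 1 ≤ x) :
    moebiusError x⁻¹ = (logMean (moebius : ArithmeticFunction ℤ) x - 1 : ℝ) := by
  have hmem : x⁻¹ ∈ Ioc (0 : ℝ) 1 := ⟨by positivity, inv_le_one_of_one_le₀ hx⟩
  simp [moebiusError, indicator_of_mem hmem]

theorem moebiusError_eq_zero {t : ℝ} (ht : 1 < t) : moebiusError t = 0 := by
  have hfloor : ⌊t⁻¹⌋₊ = 0 := Nat.floor_eq_zero.2 (inv_lt_one_of_one_lt₀ ht)
  simp [moebiusError, logMean, hfloor, ht]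

theorem abs_moebius_coe_le_one (n : ℕ) :
    |((moebius : ArithmeticFunction ℤ) : ArithmeticFunction ℝ) n| ≤ 1 := by
  rw [intCoe_apply]
  exact_mod_cast abs_moebius_le_one

theorem continuousAt_logMean_inv (a : ArithmeticFunction ℝ) {t : ℝ} (ht : 0 < t) :
    ContinuousAt (fun t ↦ (logMean a t⁻¹ : ℂ)) t :=
  Complex.continuous_ofReal.continuousAt.comp <|
    (continuousAt_logMean a (inv_pos.2 ht)).comp (continuousAt_inv₀ ht.ne')

theorem continuousAt_moebiusError {t : ℝ} (ht : t ∈ Ioo (0 : ℝ) 1) :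
    ContinuousAt moebiusError t := by
  refine (continuousAt_logMean_inv _ ht.1).sub (continuousAt_const (y := (1 : ℂ)).congr ?_)
  filter_upwards [Ioo_mem_nhds ht.1 ht.2] with u hu
  rw [indicator_of_mem (Ioo_subset_Ioc_self hu)]

theorem locallyIntegrableOn_moebiusError : LocallyIntegrableOn moebiusError (Ioi 0) := by
  refine LocallyIntegrableOn.sub ?_ (locallyIntegrableOn_indicator_Ioc _)
  exact ContinuousOn.locallyIntegrableOn
    (fun t ht ↦ (continuousAt_logMean_inv _ ht).continuousWithinAt) measurableSet_Ioi

theorem moebiusError_isBigO_nhdsGT_zero {b : ℝ} (hb : 0 < b) :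
    moebiusError =O[nhdsWithin 0 (Ioi 0)] fun t : ℝ ↦ t ^ (-b) := by
  refine IsBigO.sub (.of_bound ((∑' n : ℕ, (n : ℝ) ^ (-1 - b)) / b) ?_) (.of_bound 1 ?_)
  · filter_upwards [self_mem_nhdsWithin] with t (ht : 0 < t)
    rw [Complex.norm_real, Real.norm_eq_abs, Real.norm_of_nonneg (by positivity),
      Real.rpow_neg ht.le, ← Real.inv_rpow ht.le]
    exact abs_logMean_le abs_moebius_coe_le_one hb (inv_nonneg.2 ht.le)
  · filter_upwards [Ioc_mem_nhdsGT one_pos] with t ht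
    have ht₀ : 0 < t := ht.1
    rw [indicator_of_mem ht, norm_one, one_mul, Real.norm_of_nonneg (by positivity)]
    exact Real.one_le_rpow_of_pos_of_le_one_of_nonpos ht₀ ht.2 (by linarith)

theorem mellinConvergent_moebiusError {s : ℂ} (hs : 0 < s.re) : MellinConvergent moebiusError s :=
  mellinConvergent_of_isBigO_rpow locallyIntegrableOn_moebiusError
    (isBigO_atTop_rpow_of_eq_zero_of_one_lt (fun _ ↦ moebiusError_eq_zero) _) (lt_add_one s.re)
    (moebiusError_isBigO_nhdsGT_zero (half_pos hs)) (half_lt_self hs)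

theorem mellin_moebiusError {s : ℂ} (hs : 0 < s.re) :
    mellin moebiusError s = invZetaRemainder s := by
  have hs₀ : s ≠ 0 := by rintro rfl; simp at hs
  have hone := hasMellin_one_Ioc hs
  have hadd := (hasMellin_add (mellinConvergent_moebiusError hs) hone.1).2
  simp only [moebiusError, sub_add_cancel, mellin_logMean_moebius_inv hs, hone.2] at hadd
  rw [invZetaRemainder_eq hs₀ (riemannZeta_ne_zero_of_one_le_re (by simpa using hs.le)), hadd,
    one_div, add_sub_cancel_right]

theorem hasMellin_log_smul_moebiusError {s : ℂ} (hs : 0 < s.re) :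
    HasMellin (fun t ↦ Real.log t • moebiusError t) s (deriv invZetaRemainder s) := by
  obtain ⟨hconv, hderiv⟩ := mellin_hasDerivAt_of_isBigO_rpow locallyIntegrableOn_moebiusError
    (isBigO_atTop_rpow_of_eq_zero_of_one_lt (fun _ ↦ moebiusError_eq_zero) _) (lt_add_one s.re)
    (moebiusError_isBigO_nhdsGT_zero (half_pos hs)) (half_lt_self hs)
  have hev : invZetaRemainder =ᶠ[nhds s] mellin moebiusError := by
    filter_upwards [(isOpen_lt continuous_const Complex.continuous_re).mem_nhds hs] with z hz
    exact (mellin_moebiusError hz).symm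
  exact ⟨hconv, by rw [hev.deriv_eq, hderiv.deriv]⟩

theorem exists_integral_norm_deriv_invZetaRemainder_le :
    ∃ I : ℝ, ∀ σ : ℝ, 0 < σ → σ ≤ 1 →
      Complex.VerticalIntegrable (deriv invZetaRemainder) σ ∧
        ∫ y : ℝ, ‖deriv invZetaRemainder (σ + y * Complex.I)‖ ≤ I := by
  obtain ⟨C, -, hC⟩ := exists_norm_deriv_invZetaRemainder_le
  have hint : Integrable fun y : ℝ ↦ C * (1 + |y|) ^ (-(3 / 2) : ℝ) :=
    (integrable_one_add_norm (E := ℝ) (by simp; norm_num)).const_mul C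
  refine ⟨∫ y : ℝ, C * (1 + |y|) ^ (-(3 / 2) : ℝ), fun σ hσ₀ hσ₁ ↦ ?_⟩
  have hbound (y : ℝ) : ‖deriv invZetaRemainder (σ + y * Complex.I)‖ ≤
      C * (1 + |y|) ^ (-(3 / 2) : ℝ) := by
    simpa using hC (σ + y * Complex.I) (by simpa using hσ₀) (by simpa using hσ₁)
  have hvert : Complex.VerticalIntegrable (deriv invZetaRemainder) σ :=
    hint.mono' ((measurable_deriv _).comp (by fun_prop)).aestronglyMeasurable (.of_forall hbound)
  exact ⟨hvert, integral_mono hvert.norm hint hbound⟩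

theorem exists_abs_logMean_moebius_sub_one_mul_log_le :
    ∃ C : ℝ, ∀ x : ℝ, Real.exp 1 ≤ x →
      |logMean (moebius : ArithmeticFunction ℤ) x - 1| * Real.log x ≤ C := by
  obtain ⟨I, hI⟩ := exists_integral_norm_deriv_invZetaRemainder_le
  refine ⟨Real.exp 1 * I, fun x hx ↦ ?_⟩
  have hx₁ : 1 < x := (Real.one_lt_exp_iff.2 one_pos).trans_le hx
  have hx₀ : 0 < x := one_pos.trans hx₁
  have hlog : 1 ≤ Real.log x := (Real.le_log_iff_exp_le hx₀).2 hx
  set σ := (Real.log x)⁻¹ with hσ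
  have hσ₀ : 0 < σ := by positivity
  obtain ⟨hvert, hintegral⟩ := hI σ hσ₀ (inv_le_one_of_one_le₀ hlog)
  have hmellin (y : ℝ) := (hasMellin_log_smul_moebiusError (s := σ + y * Complex.I)
    (by simpa using hσ₀)).2
  have hpow : x⁻¹ ^ (-σ) = Real.exp 1 := by
    rw [Real.inv_rpow hx₀.le, Real.rpow_neg hx₀.le, inv_inv, Real.rpow_def_of_pos hx₀, hσ,
      mul_inv_cancel₀ (by positivity)]
  have hcont : ContinuousAt (fun t ↦ Real.log t • moebiusError t) x⁻¹ :=
    (Real.continuousAt_log (inv_ne_zero hx₀.ne')).smul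
      (continuousAt_moebiusError ⟨inv_pos.2 hx₀, inv_lt_one_of_one_lt₀ hx₁⟩)
  have hnorm := norm_le_rpow_mul_integral_norm_mellin (inv_pos.2 hx₀)
    (hasMellin_log_smul_moebiusError (by simpa using hσ₀)).1
    (by simpa only [Complex.VerticalIntegrable, hmellin] using hvert) hcont
  calc |logMean (moebius : ArithmeticFunction ℤ) x - 1| * Real.log x
      = ‖Real.log x⁻¹ • moebiusError x⁻¹‖ := by
        rw [moebiusError_inv hx₁.le, norm_smul, Complex.norm_real, Real.log_inv, norm_neg,
          Real.norm_of_nonneg (by linarith), Real.norm_eq_abs, mul_comm]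
    _ ≤ x⁻¹ ^ (-σ) * ∫ y : ℝ, ‖deriv invZetaRemainder (σ + y * Complex.I)‖ := by
        simpa only [hmellin] using hnorm
    _ ≤ Real.exp 1 * I := by rw [hpow]; gcongr

theorem exists_abs_logMean_moebius_sub_one_le :
    ∃ C : ℝ, ∀ x : ℝ, 1 ≤ x →
      |logMean (moebius : ArithmeticFunction ℤ) x - 1| ≤ C / (1 + Real.log x) := by
  obtain ⟨C, hC⟩ := exists_abs_logMean_moebius_sub_one_mul_log_le
  set D := (∑' n : ℕ, (n : ℝ) ^ (-1 - 1 : ℝ)) / 1 * Real.exp 1 + 1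
  refine ⟨2 * max C D, fun x hx ↦ ?_⟩
  have hx₀ : 0 < x := by linarith
  have hlog₀ : 0 ≤ Real.log x := Real.log_nonneg hx
  have habs := abs_nonneg (logMean (moebius : ArithmeticFunction ℤ) x - 1)
  rw [le_div_iff₀ (by linarith)]
  rcases le_total (Real.exp 1) x with hex | hex
  · have hlog : 1 ≤ Real.log x := (Real.le_log_iff_exp_le hx₀).2 hex
    nlinarith [hC x hex, le_max_left C D]
  · have hlog : Real.log x ≤ 1 := (Real.log_le_iff_le_exp hx₀).2 hex
    have hD : |logMean (moebius : ArithmeticFunction ℤ) x - 1| ≤ D := by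
      refine (abs_sub _ _).trans ?_
      rw [abs_one]
      refine add_le_add_left ?_ 1
      refine (abs_logMean_le abs_moebius_coe_le_one one_pos hx₀.le).trans ?_
      rw [Real.rpow_one]
      gcongr
    nlinarith [le_max_right C D]

end MoebiusError

section LogMeanSquare

open Finset ArithmeticFunction

theorem natCast_inv_le_two_mul_log_succ_sub_log {n : ℕ} (hn : 1 ≤ n) :
    (n : ℝ)⁻¹ ≤ 2 * (Real.log (n + 1) - Real.log n) := by
  have hn₁ : (1 : ℝ) ≤ n := Nat.one_le_cast.2 hn
  calc (n : ℝ)⁻¹ ≤ 2 * (n + 1 : ℝ)⁻¹ := by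
        rw [← div_eq_mul_inv, inv_eq_one_div, div_le_div_iff₀ (by positivity) (by positivity)]
        linarith
    _ = 2 * (1 - ((n + 1 : ℝ) / n)⁻¹) := by
        field_simp
        simp
    _ ≤ 2 * (Real.log (n + 1) - Real.log n) := by
        rw [← Real.log_div (by positivity) (by positivity)]
        gcongr
        exact Real.one_sub_inv_le_log_of_pos (by positivity)

theorem one_sub_log_two_le_one_add_log_div_succ {n : ℕ} {x : ℝ} (hx : 1 ≤ x) (hn : (n : ℝ) ≤ x) :
    1 - Real.log 2 ≤ 1 + Real.log (x / (n + 1)) := by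
  rw [sub_eq_add_neg, ← Real.log_inv]
  gcongr
  rw [inv_eq_one_div, div_le_div_iff₀ two_pos (by positivity)]
  linarith

theorem inv_mul_inv_one_add_log_div_sq_le {n : ℕ} {x : ℝ} (hn : 1 ≤ n) (hnx : (n : ℝ) ≤ x) :
    (n : ℝ)⁻¹ * ((1 + Real.log (x / n)) ^ 2)⁻¹ ≤
      2 / (1 + Real.log (x / (n + 1))) - 2 / (1 + Real.log (x / n)) := by
  have hn₁ : (1 : ℝ) ≤ n := Nat.one_le_cast.2 hn
  have hx₀ : 0 < x := by linarith
  have hdiff : (n : ℝ)⁻¹ ≤ 2 * ((1 + Real.log (x / n)) - (1 + Real.log (x / (n + 1)))) := by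
    rw [Real.log_div hx₀.ne' (by positivity), Real.log_div hx₀.ne' (by positivity)]
    linarith [natCast_inv_le_two_mul_log_succ_sub_log hn]
  have hB : 0 < 1 + Real.log (x / (n + 1)) := by
    linarith [one_sub_log_two_le_one_add_log_div_succ (hn₁.trans hnx) hnx, Real.log_two_lt_d9]
  set A := 1 + Real.log (x / n)
  set B := 1 + Real.log (x / (n + 1))
  have hBA : B ≤ A := by linarith [inv_pos.2 (one_pos.trans_le hn₁)]
  have hA : 0 < A := hB.trans_le hBA
  calc (n : ℝ)⁻¹ * (A ^ 2)⁻¹ ≤ 2 * (A - B) * (B * A)⁻¹ := by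
        rw [sq]
        gcongr
    _ = 2 / B - 2 / A := by
        field_simp

theorem sum_inv_mul_inv_one_add_log_div_sq_le {x : ℝ} (hx : 1 ≤ x) :
    ∑ n ∈ Icc 1 ⌊x⌋₊, (n : ℝ)⁻¹ * ((1 + Real.log (x / n)) ^ 2)⁻¹ ≤ 2 / (1 - Real.log 2) := by
  have hx₀ : 0 ≤ x := by linarith
  have hlog₀ : 0 ≤ Real.log x := Real.log_nonneg hx
  have hlog_two : 0 < 1 - Real.log 2 := by linarith [Real.log_two_lt_d9]
  have htel := sum_Ico_sub (fun n : ℕ ↦ 2 / (1 + Real.log (x / n))) (Nat.le_add_left 1 ⌊x⌋₊)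
  rw [Ico_add_one_right_eq_Icc] at htel
  calc ∑ n ∈ Icc 1 ⌊x⌋₊, (n : ℝ)⁻¹ * ((1 + Real.log (x / n)) ^ 2)⁻¹
      ≤ ∑ n ∈ Icc 1 ⌊x⌋₊,
          (2 / (1 + Real.log (x / (n + 1 : ℕ))) - 2 / (1 + Real.log (x / n))) := by
        refine sum_le_sum fun n hn ↦ ?_
        obtain ⟨hn₁, hnx⟩ := mem_Icc.1 hn
        push_cast
        exact inv_mul_inv_one_add_log_div_sq_le hn₁ ((Nat.le_floor_iff hx₀).1 hnx)
    _ = 2 / (1 + Real.log (x / (⌊x⌋₊ + 1))) - 2 / (1 + Real.log x) := by simpa using htel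
    _ ≤ 2 / (1 + Real.log (x / (⌊x⌋₊ + 1))) := sub_le_self _ (by positivity)
    _ ≤ 2 / (1 - Real.log 2) := by
        gcongr
        exact one_sub_log_two_le_one_add_log_div_succ hx (Nat.floor_le hx₀)

theorem log_le_sum_Icc_inv {x : ℝ} (hx : 0 ≤ x) :
    Real.log x ≤ ∑ n ∈ Icc 1 ⌊x⌋₊, (n : ℝ)⁻¹ := by
  simpa [harmonic_eq_sum_Icc] using log_le_harmonic_floor x hx

theorem exists_sum_inv_mul_logMean_moebius_sub_one_sq_le :
    ∃ C : ℝ, ∀ x : ℝ, 1 ≤ x → ∑ n ∈ Icc 1 ⌊x⌋₊,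
      (n : ℝ)⁻¹ * (logMean (moebius : ArithmeticFunction ℤ) (x / n) - 1) ^ 2 ≤ C := by
  obtain ⟨C, hC⟩ := exists_abs_logMean_moebius_sub_one_le
  refine ⟨C ^ 2 * (2 / (1 - Real.log 2)), fun x hx ↦ ?_⟩
  calc ∑ n ∈ Icc 1 ⌊x⌋₊, (n : ℝ)⁻¹ * (logMean (moebius : ArithmeticFunction ℤ) (x / n) - 1) ^ 2
      ≤ ∑ n ∈ Icc 1 ⌊x⌋₊, C ^ 2 * ((n : ℝ)⁻¹ * ((1 + Real.log (x / n)) ^ 2)⁻¹) := by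
        refine sum_le_sum fun n hn ↦ ?_
        obtain ⟨hn₁, hnx⟩ := mem_Icc.1 hn
        have hxn : 1 ≤ x / n :=
          (one_le_div (Nat.cast_pos.2 hn₁)).2 ((Nat.le_floor_iff (by linarith)).1 hnx)
        calc (n : ℝ)⁻¹ * (logMean (moebius : ArithmeticFunction ℤ) (x / n) - 1) ^ 2
            ≤ (n : ℝ)⁻¹ * (C / (1 + Real.log (x / n))) ^ 2 := by
              rw [← sq_abs]
              gcongr
              exact hC _ hxn
          _ = C ^ 2 * ((n : ℝ)⁻¹ * ((1 + Real.log (x / n)) ^ 2)⁻¹) := by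
              rw [div_pow]
              ring
    _ ≤ C ^ 2 * (2 / (1 - Real.log 2)) := by
        rw [← mul_sum]
        gcongr
        exact sum_inv_mul_inv_one_add_log_div_sq_le hx

-- Expanding around `1` gives `g ^ 2 = 2 * g - 1 + (g - 1) ^ 2`, and the sum of the linear part,
-- `2 * log x - ∑ 1 / n`, is known exactly.
theorem exists_sum_inv_mul_logMean_moebius_sq_le :
    ∃ C > 0, ∀ x : ℝ, 1 ≤ x → ∑ n ∈ Icc 1 ⌊x⌋₊,
      (n : ℝ)⁻¹ * logMean (moebius : ArithmeticFunction ℤ) (x / n) ^ 2 ≤ Real.log x + C := by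
  obtain ⟨C, hC⟩ := exists_sum_inv_mul_logMean_moebius_sub_one_sq_le
  refine ⟨max C 1, by positivity, fun x hx ↦ ?_⟩
  have hexpand (n : ℕ) : (n : ℝ)⁻¹ * logMean (moebius : ArithmeticFunction ℤ) (x / n) ^ 2 =
      2 * ((n : ℝ)⁻¹ * logMean (moebius : ArithmeticFunction ℤ) (x / n)) - (n : ℝ)⁻¹ +
        (n : ℝ)⁻¹ * (logMean (moebius : ArithmeticFunction ℤ) (x / n) - 1) ^ 2 := by ring
  simp_rw [hexpand, sum_add_distrib, sum_sub_distrib, ← mul_sum]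
  rw [sum_inv_mul_logMean_moebius hx]
  linarith [log_le_sum_Icc_inv (x := x) (by linarith), hC x hx, le_max_left C 1]

end LogMeanSquare

section ThetaSum

open Finset ArithmeticFunction

theorem coprime_lcm_iff (m n k : ℕ) : (m.lcm n).Coprime k ↔ m.Coprime k ∧ n.Coprime k :=
  ⟨fun h ↦ ⟨h.coprime_dvd_left (Nat.dvd_lcm_left m n), h.coprime_dvd_left (Nat.dvd_lcm_right m n)⟩,
    fun h ↦ (h.1.mul_left h.2).coprime_dvd_left (Nat.lcm_dvd_mul m n)⟩

theorem ite_coprime_thetaD (q : ℕ) (w : ℝ) {d : ℕ} (hd : d ∈ Icc 1 ⌊(q : ℝ) ^ w⌋₊) :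
    (if d.Coprime q then thetaD q w d else 0) =
      moebiusCoprime q d * Real.log ((q : ℝ) ^ w / d) / Real.log ((q : ℝ) ^ w) := by
  obtain ⟨hd₁, hdW⟩ := mem_Icc.1 hd
  have htheta : thetaD q w d =
      moebius d * Real.log ((q : ℝ) ^ w / d) / Real.log ((q : ℝ) ^ w) :=
    if_pos ⟨hd₁, (Nat.le_floor_iff (by positivity)).1 hdW⟩
  rw [htheta, moebiusCoprime_apply]
  split_ifs <;> simp

theorem sum_sum_thetaD (q : ℕ) (w : ℝ) :
    ∑ d₁ ∈ Icc 1 ⌊(q : ℝ) ^ w⌋₊, ∑ d₂ ∈ Icc 1 ⌊(q : ℝ) ^ w⌋₊, thetaD q w d₁ * thetaD q w d₂ *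
        (if Nat.Coprime (Nat.lcm d₁ d₂) q then (Nat.lcm d₁ d₂ : ℝ)⁻¹ else 0) =
      (∑ d₁ ∈ Icc 1 ⌊(q : ℝ) ^ w⌋₊, ∑ d₂ ∈ Icc 1 ⌊(q : ℝ) ^ w⌋₊,
        (moebiusCoprime q d₁ * Real.log ((q : ℝ) ^ w / d₁)) *
          (moebiusCoprime q d₂ * Real.log ((q : ℝ) ^ w / d₂)) * (Nat.lcm d₁ d₂ : ℝ)⁻¹) /
        Real.log ((q : ℝ) ^ w) ^ 2 := by
  simp_rw [sum_div]
  refine sum_congr rfl fun d₁ hd₁ ↦ sum_congr rfl fun d₂ hd₂ ↦ ?_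
  calc thetaD q w d₁ * thetaD q w d₂ *
        (if Nat.Coprime (Nat.lcm d₁ d₂) q then (Nat.lcm d₁ d₂ : ℝ)⁻¹ else 0)
      = (if d₁.Coprime q then thetaD q w d₁ else 0) *
          (if d₂.Coprime q then thetaD q w d₂ else 0) * (Nat.lcm d₁ d₂ : ℝ)⁻¹ := by
        simp only [coprime_lcm_iff, ite_and]
        split_ifs <;> simp
    _ = _ := by
        rw [ite_coprime_thetaD q w hd₁, ite_coprime_thetaD q w hd₂]
        ring

theorem sum_sum_mul_inv_lcm_nonneg (u : ℕ → ℝ) (N : ℕ) :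
    0 ≤ ∑ d₁ ∈ Icc 1 N, ∑ d₂ ∈ Icc 1 N, u d₁ * u d₂ * (Nat.lcm d₁ d₂ : ℝ)⁻¹ := by
  rw [sum_sum_mul_inv_lcm]
  exact sum_nonneg fun r _ ↦ by positivity

end ThetaSum

/-- **Estimate for the `θ` sum**: for a fixed `w > 0`, as `q → ∞`,
`|∑_{d₁,d₂ ≤ W} θ_{d₁}θ_{d₂}χ₀([d₁,d₂])/[d₁,d₂]| ≤ (1 + O(L⁻¹))·q/(φ(q)·w·L)`, where `χ₀` is
the principal character mod `q` and `[d₁,d₂] = lcm(d₁,d₂)`. -/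
theorem theta_sum_estimate (w : ℝ) (hw : 0 < w) :
    ∃ C : ℝ, 0 < C ∧ ∃ q₀ : ℕ, ∀ q : ℕ, q₀ ≤ q →
      |∑ d₁ ∈ Finset.Icc 1 ⌊(q : ℝ) ^ w⌋₊, ∑ d₂ ∈ Finset.Icc 1 ⌊(q : ℝ) ^ w⌋₊,
          thetaD q w d₁ * thetaD q w d₂ *
            (if Nat.Coprime (Nat.lcm d₁ d₂) q then ((Nat.lcm d₁ d₂ : ℝ))⁻¹ else 0)|
        ≤ (1 + C / Real.log q) *
            ((q : ℝ) / ((Nat.totient q : ℝ) * (w * Real.log q))) := by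
  obtain ⟨C, hC, hsq⟩ := exists_sum_inv_mul_logMean_moebius_sq_le
  refine ⟨C / w, by positivity, 3, fun q hq ↦ ?_⟩
  have hq₁ : (1 : ℝ) < q := Nat.one_lt_cast.2 (by lia)
  have hlogq : 0 < Real.log q := Real.log_pos hq₁
  have hlogW : Real.log ((q : ℝ) ^ w) = w * Real.log q := Real.log_rpow (by linarith) w
  have : (0 : ℝ) < Nat.totient q := Nat.cast_pos.2 (Nat.totient_pos.2 (by lia))
  rw [sum_sum_thetaD, abs_of_nonneg (div_nonneg (sum_sum_mul_inv_lcm_nonneg _ _) (sq_nonneg _))]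
  calc _ ≤ (q : ℝ) / Nat.totient q * (Real.log ((q : ℝ) ^ w) + C) /
        Real.log ((q : ℝ) ^ w) ^ 2 := by
        gcongr
        refine (sum_sum_moebiusCoprime_log_mul_inv_lcm_le (by lia) _).trans ?_
        gcongr
        exact hsq _ (Real.one_le_rpow hq₁.le hw.le)
    _ = (1 + C / w / Real.log q) * (q / (Nat.totient q * (w * Real.log q))) := by
        rw [hlogW]
        field_simp
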